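/- arXiv:1708.02028 — 3 statements merged into one kernel-verified Lean document; each statement's English description precedes it below -/
import Mathlib

section
/- Let G be a graph of maximum degree at most d (d ≥ 3) and M an induced matching of G that is stable under the local-search operation: M is maximal and for every edge e ∈ M and every two distinct edges e', e'' ∈ PC_G(M, e), the edges e' and e'' conflict, i.e., e'' ∈ C_G(e'). Suppose c_G(xy) ≥ f and n_{xy} ≥ g for every edge xy of G, where n_{xy} = |N_G(x) ∩ N_G(y)|. Then |M| ≥ m(G) / (3d² − d − f − ((d+6)/2)·g). -/
open Classical

variable {V : Type*}

/-- Two edges (as `Sym2 V`) are in conflict: they are at distance at most 2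
in the line graph, i.e. they share a vertex or some edge of `G` joins them. -/
def Conflict (G : SimpleGraph V) (e f : Sym2 V) : Prop :=
  ∃ a ∈ e, ∃ b ∈ f, a = b ∨ G.Adj a b

/-- `C_G(e)`: the set of edges of `G` in conflict with `e` (including `e`). -/
def CSet (G : SimpleGraph V) (e : Sym2 V) : Set (Sym2 V) :=
  {f | f ∈ G.edgeSet ∧ Conflict G e f}

/-- `PC_G(M, e)`: the private conflict edges of `e` with respect to `M`. -/
def PCSet (G : SimpleGraph V) (M : Set (Sym2 V)) (e : Sym2 V) : Set (Sym2 V) :=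
  CSet G e \ ⋃ f ∈ M \ {e}, CSet G f

/-- `M` is an induced matching of `G`. -/
def IsInducedMatching (G : SimpleGraph V) (M : Set (Sym2 V)) : Prop :=
  M ⊆ G.edgeSet ∧ ∀ e ∈ M, ∀ f ∈ M, e ≠ f → ¬ Conflict G e f

/-- `M` is a maximal induced matching of `G`. -/
def IsMaximalInducedMatching (G : SimpleGraph V) (M : Set (Sym2 V)) : Prop :=
  IsInducedMatching G M ∧ ∀ M', IsInducedMatching G M' → M ⊆ M' → M' = M

/-- `M` is stable under the local-search exchange operation: any two distinct
private conflict edges of an edge of `M` conflict with each other. -/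
def LSStable (G : SimpleGraph V) (M : Set (Sym2 V)) : Prop :=
  ∀ e ∈ M, ∀ e' ∈ PCSet G M e, ∀ e'' ∈ PCSet G M e, e' ≠ e'' → e'' ∈ CSet G e'

/-- The edges of `G` with both endpoints in `S`. -/
def edgesWithin (G : SimpleGraph V) (S : Set V) : Set (Sym2 V) :=
  {e | e ∈ G.edgeSet ∧ ∀ a ∈ e, a ∈ S}

/-- The edges of `G` with one endpoint in `S` and the other in `T`. -/
def edgesBetween (G : SimpleGraph V) (S T : Set V) : Set (Sym2 V) :=
  {e | e ∈ G.edgeSet ∧ ∃ a b : V, e = s(a, b) ∧ a ∈ S ∧ b ∈ T}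

/-- `G` has no induced cycle of length 4. -/
def C4Free (G : SimpleGraph V) : Prop :=
  ¬ ∃ a b c d : V, G.Adj a b ∧ G.Adj b c ∧ G.Adj c d ∧ G.Adj d a ∧
      ¬ G.Adj a c ∧ ¬ G.Adj b d ∧ a ≠ c ∧ b ≠ d

/-- `G` has no induced cycle of length 5. -/
def C5Free (G : SimpleGraph V) : Prop :=
  ¬ ∃ a b c d e : V, G.Adj a b ∧ G.Adj b c ∧ G.Adj c d ∧ G.Adj d e ∧ G.Adj e a ∧
      ¬ G.Adj a c ∧ ¬ G.Adj a d ∧ ¬ G.Adj b d ∧ ¬ G.Adj b e ∧ ¬ G.Adj c e ∧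
      a ≠ c ∧ a ≠ d ∧ b ≠ d ∧ b ≠ e ∧ c ≠ e

/-- `G` has no induced `K_{1,3}` (claw). -/
def ClawFree (G : SimpleGraph V) : Prop :=
  ¬ ∃ v a b c : V, G.Adj v a ∧ G.Adj v b ∧ G.Adj v c ∧
      ¬ G.Adj a b ∧ ¬ G.Adj a c ∧ ¬ G.Adj b c ∧ a ≠ b ∧ a ≠ c ∧ b ≠ c


theorem aux_double_count [Fintype V] (G : SimpleGraph V) (d : ℕ)
    (hΔ : ∀ v : V, G.degree v ≤ d) (S : Finset V) :
    (G.edgeFinset.filter (fun e => ∃ v ∈ e, v ∈ S)).card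
      + (G.edgeFinset.filter (fun e => ∀ v ∈ e, v ∈ S)).card ≤ d * S.card := by
  have h1 : ∑ v ∈ S, (G.edgeFinset.filter (fun e => v ∈ e)).card
      = ∑ e ∈ G.edgeFinset, (S.filter (fun v => v ∈ e)).card :=
    Finset.sum_card_bipartiteAbove_eq_sum_card_bipartiteBelow (fun (v : V) (e : Sym2 V) => v ∈ e)
  have h2 : ∑ v ∈ S, (G.edgeFinset.filter (fun e => v ∈ e)).card ≤ d * S.card := by
    rw [mul_comm, ← smul_eq_mul]
    apply Finset.sum_le_card_nsmul
    intro v _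
    refine le_trans (le_of_eq ?_) (hΔ v)
    rw [← G.card_incidenceFinset_eq_degree v, G.incidenceFinset_eq_filter v]
  refine le_trans ?_ h2
  rw [h1, Finset.card_filter, Finset.card_filter, ← Finset.sum_add_distrib]
  apply Finset.sum_le_sum
  intro e he
  induction e using Sym2.ind with
  | _ a b =>
    have hab : G.Adj a b := by simpa using he
    have hne : a ≠ b := hab.ne
    have hf : S.filter (fun v => v ∈ s(a, b)) = ({a, b} : Finset V) ∩ S := by
      ext v; simp [Finset.mem_inter]; tauto
    rw [hf]
    by_cases ha : a ∈ S <;> by_cases hb : b ∈ S <;>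
      simp [ha, hb, Finset.insert_inter_of_mem, Finset.insert_inter_of_notMem, hne]

theorem aux_cset [Fintype V] (G : SimpleGraph V) (u v : V) (h : G.Adj u v) :
    CSet G s(u, v) = ((G.edgeFinset.filter
      (fun e => ∃ w ∈ e, w ∈ G.neighborFinset u ∪ G.neighborFinset v) : Finset (Sym2 V)) :
        Set (Sym2 V)) := by
  ext e
  simp only [CSet, Conflict, Set.mem_ofPred_eq, Finset.coe_filter, SimpleGraph.mem_edgeFinset,
    Finset.mem_union, SimpleGraph.mem_neighborFinset, Sym2.mem_iff]
  constructor
  · rintro ⟨he, a, ha, b, hb, hab⟩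
    refine ⟨he, b, hb, ?_⟩
    rcases ha with rfl | rfl <;> rcases hab with rfl | hab
    · exact Or.inr h.symm
    · exact Or.inl hab
    · exact Or.inl h
    · exact Or.inr hab
  · rintro ⟨he, b, hb, hab | hab⟩
    · exact ⟨he, u, Or.inl rfl, b, hb, Or.inr hab⟩
    · exact ⟨he, v, Or.inr rfl, b, hb, Or.inr hab⟩

/-- counting lemma for one edge -/
theorem aux_edge [Fintype V] (G : SimpleGraph V) (d : ℕ)
    (hΔ : ∀ v : V, G.degree v ≤ d) (u v : V) (h : G.Adj u v) :
    (CSet G s(u, v)).ncard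
      + (G.edgeFinset.filter
          (fun e => ∀ w ∈ e, w ∈ G.neighborFinset u ∪ G.neighborFinset v)).card
      + d * (G.neighborFinset u ∩ G.neighborFinset v).card ≤ d * (G.degree u + G.degree v) := by
  rw [aux_cset G u v h, Set.ncard_coe_finset]
  have := aux_double_count G d hΔ (G.neighborFinset u ∪ G.neighborFinset v)
  have h2 := Finset.card_union_add_card_inter (G.neighborFinset u) (G.neighborFinset v)
  rw [G.card_neighborFinset_eq_degree, G.card_neighborFinset_eq_degree] at h2
  rw [← h2, mul_add]
  omega

/-- abstract side lemma -/
theorem aux_side [Fintype V] (G : SimpleGraph V) (d F k : ℕ)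
    (hΔ : ∀ v : V, G.degree v ≤ d)
    (hF : ∀ e ∈ G.edgeSet, F ≤ (CSet G e).ncard)
    (hk : ∀ u v : V, G.Adj u v → k ≤ (G.neighborFinset u ∩ G.neighborFinset v).card)
    (x a : V) (hxa : G.Adj x a) (Q : Finset (Sym2 V)) (hQG : Q ⊆ G.edgeFinset)
    (hQ : ∀ e ∈ Q, ∃ α w, e = s(α, w) ∧ G.Adj x α ∧ ¬ G.Adj x w ∧ w ≠ x ∧
      (G.Adj a w ∨ G.Adj a α)) :
    Q.card + F + d + 3 * k ≤ 2 * d ^ 2 := by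
  set S := G.neighborFinset x ∪ G.neighborFinset a with hS
  set T := G.neighborFinset x ∩ G.neighborFinset a with hT
  set E := G.edgeFinset.filter (fun e => ∀ w ∈ e, w ∈ S) with hE
  set Q1 := Q.filter (fun e => ∀ w ∈ e, w ∈ S) with hQ1
  set Q2 := Q.filter (fun e => ¬ ∀ w ∈ e, w ∈ S) with hQ2
  have hq : Q1.card + Q2.card = Q.card := Finset.card_filter_add_card_filter_not _
  have hc := aux_edge G d hΔ x a hxa
  rw [← hS, ← hE, ← hT] at hc
  have hFa := hF s(x, a) hxa
  have hka := hk x a hxa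
  rw [← hT] at hka
  -- star edges
  set X1 := (G.neighborFinset x).image (fun t => s(x, t)) with hX1
  set X2 := T.image (fun t => s(a, t)) with hX2
  have hX1c : X1.card = G.degree x := by
    rw [hX1, Finset.card_image_of_injective _ (fun s t h => Sym2.congr_right.1 h),
      G.card_neighborFinset_eq_degree]
  have hX2c : X2.card = T.card := by
    rw [hX2, Finset.card_image_of_injective _ (fun s t h => Sym2.congr_right.1 h)]
  have hsub : Q1 ∪ (X1 ∪ X2) ⊆ E := by
    intro e he
    simp only [Finset.mem_union, hQ1, hX1, hX2, Finset.mem_filter, Finset.mem_image] at he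
    rw [hE, Finset.mem_filter]
    rcases he with ⟨h1, h2⟩ | ⟨t, ht, rfl⟩ | ⟨t, ht, rfl⟩
    · exact ⟨hQG h1, h2⟩
    · rw [SimpleGraph.mem_neighborFinset] at ht
      refine ⟨by simpa using ht, ?_⟩
      intro w hw
      rw [Sym2.mem_iff] at hw
      rcases hw with rfl | rfl
      · simp [hS, hxa.symm]
      · simp [hS, ht]
    · simp only [hT, Finset.mem_inter, SimpleGraph.mem_neighborFinset] at ht
      refine ⟨by simpa using ht.2, ?_⟩
      intro w hw
      rw [Sym2.mem_iff] at hw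
      rcases hw with rfl | rfl
      · simp [hS, hxa]
      · simp [hS, ht.1]
  have hd2 : Disjoint X1 X2 := by
    rw [Finset.disjoint_left]
    intro e h1 h2
    simp only [hX1, hX2, Finset.mem_image, hT, Finset.mem_inter,
      SimpleGraph.mem_neighborFinset] at h1 h2
    obtain ⟨t, ht, rfl⟩ := h1
    obtain ⟨s, hs, hst⟩ := h2
    have : x ∈ s(a, s) := by rw [hst]; simp
    rw [Sym2.mem_iff] at this
    rcases this with h | h
    · exact hxa.ne h
    · exact hs.1.ne h
  have hd1 : Disjoint Q1 (X1 ∪ X2) := by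
    rw [Finset.disjoint_left]
    intro e h1 h2
    rw [hQ1, Finset.mem_filter] at h1
    obtain ⟨α, w, rfl, hα, hw, hwx, -⟩ := hQ e h1.1
    simp only [hX1, hX2, Finset.mem_union, Finset.mem_image, hT, Finset.mem_inter,
      SimpleGraph.mem_neighborFinset] at h2
    have hwm : w ∈ s(α, w) := by simp
    rcases h2 with ⟨t, ht, hh⟩ | ⟨t, ht, hh⟩
    · rw [← hh, Sym2.mem_iff] at hwm
      rcases hwm with h | h
      · exact hwx h
      · exact hw (h ▸ ht)
    · rw [← hh, Sym2.mem_iff] at hwm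
      rcases hwm with h | h
      · exact hw (h ▸ hxa)
      · exact hw (h ▸ ht.1)
  have hEc : Q1.card + (G.degree x + T.card) ≤ E.card := by
    have := Finset.card_le_card hsub
    rwa [Finset.card_union_of_disjoint hd1, Finset.card_union_of_disjoint hd2, hX1c, hX2c] at this
  have hQ2c : Q2.card + 2 * T.card ≤ d * T.card := by
    have hsub2 : Q2 ⊆ T.biUnion (fun t => ((G.neighborFinset t) \ {x, a}).image
        (fun w => s(t, w))) := by
      intro e he
      rw [hQ2, Finset.mem_filter] at he
      obtain ⟨α, w, rfl, hα, hw, hwx, hor⟩ := hQ e he.1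
      have hadj : G.Adj α w := by simpa using hQG he.1
      have haw : ¬ G.Adj a w := by
        intro haw
        apply he.2
        intro v hv
        rw [Sym2.mem_iff] at hv
        rcases hv with rfl | rfl
        · simp [hS, hα]
        · simp [hS, haw]
      have haα : G.Adj a α := hor.resolve_left haw
      rw [Finset.mem_biUnion]
      refine ⟨α, by simp [hT, hα, haα], ?_⟩
      rw [Finset.mem_image]
      refine ⟨w, ?_, rfl⟩
      simp only [Finset.mem_sdiff, SimpleGraph.mem_neighborFinset, Finset.mem_insert,
        Finset.mem_singleton, not_or]
      exact ⟨hadj, hwx, fun h => hw (h ▸ hxa)⟩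
    have h3 := Finset.card_le_card hsub2
    have h4 : (T.biUnion (fun t => ((G.neighborFinset t) \ {x, a}).image
        (fun w => s(t, w)))).card ≤ ∑ t ∈ T, (d - 2) := by
      refine le_trans Finset.card_biUnion_le (Finset.sum_le_sum ?_)
      intro t ht
      simp only [hT, Finset.mem_inter, SimpleGraph.mem_neighborFinset] at ht
      refine le_trans Finset.card_image_le ?_
      rw [Finset.card_sdiff_of_subset, Finset.card_pair hxa.ne, G.card_neighborFinset_eq_degree]
      · have := hΔ t; omega
      · intro v hv
        simp only [Finset.mem_insert, Finset.mem_singleton] at hv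
        rcases hv with rfl | rfl
        · simp [ht.1.symm]
        · simp [ht.2.symm]
    rw [Finset.sum_const, smul_eq_mul] at h4
    rcases Finset.eq_empty_or_nonempty T with h0 | ⟨t, ht⟩
    · simp [h0] at h4 h3 ⊢
      exact h3
    · have hd2 : 2 ≤ d := by
        simp only [hT, Finset.mem_inter, SimpleGraph.mem_neighborFinset] at ht
        have : ({x, a} : Finset V).card ≤ (G.neighborFinset t).card := by
          apply Finset.card_le_card
          intro v hv
          simp only [Finset.mem_insert, Finset.mem_singleton] at hv
          rcases hv with rfl | rfl
          · simp [ht.1.symm]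
          · simp [ht.2.symm]
        rw [Finset.card_pair hxa.ne, G.card_neighborFinset_eq_degree] at this
        exact this.trans (hΔ t)
      obtain ⟨c, rfl⟩ := Nat.exists_eq_add_of_le hd2
      have : 2 + c - 2 = c := by omega
      rw [this] at h4
      nlinarith
  have hdx := hΔ x
  have hda := hΔ a
  have hd1 : 1 ≤ d := by
    have : 0 < G.degree x := by
      rw [G.degree_pos_iff_exists_adj]; exact ⟨a, hxa⟩
    omega
  have h5 : d * G.degree a ≤ d * d := Nat.mul_le_mul_left _ hda
  have h6 : d * G.degree x + d ≤ d * d + G.degree x := by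
    obtain ⟨c, hc'⟩ := Nat.exists_eq_add_of_le hdx
    obtain ⟨j, rfl⟩ := Nat.exists_eq_add_of_le hd1
    nlinarith
  rw [mul_add] at hc
  have h7 : d ^ 2 = d * d := sq d
  omega

theorem aux_conflict_symm (G : SimpleGraph V) {e f : Sym2 V} (h : Conflict G e f) :
    Conflict G f e := by
  obtain ⟨a, ha, b, hb, h⟩ := h
  exact ⟨b, hb, a, ha, h.imp Eq.symm fun h => h.symm⟩

theorem aux_conflict_self (G : SimpleGraph V) (e : Sym2 V) : Conflict G e e := by
  induction e using Sym2.ind with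
  | _ a b => exact ⟨a, by simp, a, by simp, Or.inl rfl⟩

theorem aux_cover (G : SimpleGraph V) (M : Set (Sym2 V))
    (hmax : IsMaximalInducedMatching G M) (h : Sym2 V) (hh : h ∈ G.edgeSet) :
    ∃ e ∈ M, h ∈ CSet G e := by
  by_contra hcon
  push Not at hcon
  have hc : ∀ e ∈ M, ¬ Conflict G e h := fun e he hc => hcon e he ⟨hh, hc⟩
  have hM : IsInducedMatching G (insert h M) := by
    refine ⟨Set.insert_subset hh hmax.1.1, ?_⟩
    intro e he f hf hne
    rcases he with rfl | he <;> rcases hf with rfl | hf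
    · exact absurd rfl hne
    · exact fun h => hc f hf (aux_conflict_symm G h)
    · exact hc e he
    · exact hmax.1.2 e he f hf hne
  have := hmax.2 _ hM (Set.subset_insert _ _)
  have hm : h ∈ M := by rw [← this]; exact Set.mem_insert _ _
  exact hc h hm (aux_conflict_self G h)

theorem aux_mem_PC (G : SimpleGraph V) (M : Set (Sym2 V)) (e h : Sym2 V) :
    h ∈ PCSet G M e ↔ h ∈ CSet G e ∧ ∀ f ∈ M, f ≠ e → h ∉ CSet G f := by
  simp only [PCSet, Set.mem_sdiff, Set.mem_iUnion, Set.mem_singleton_iff, not_exists]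
  constructor
  · rintro ⟨h1, h2⟩
    exact ⟨h1, fun f hf hne hc => h2 f ⟨hf, hne⟩ hc⟩
  · rintro ⟨h1, h2⟩
    exact ⟨h1, fun f hf hc => h2 f hf.1 hf.2 hc⟩

theorem aux_X (G : SimpleGraph V) (M : Set (Sym2 V))
    (hmax : IsMaximalInducedMatching G M) (e h1 h2 : Sym2 V) 
    (H1 : h1 ∈ PCSet G M e) (H2 : h2 ∈ PCSet G M e) (b w : V) (hb : b ∈ h1) (hw : w ∈ h2)
    (hbw : G.Adj b w) : s(b, w) ∈ PCSet G M e := by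
  rw [aux_mem_PC] at H1 H2
  have key : ∀ f ∈ M, f ≠ e → s(b, w) ∉ CSet G f := by
    rintro f hf hne ⟨-, c, hc, v, hv, hcv⟩
    rw [Sym2.mem_iff] at hv
    rcases hv with rfl | rfl
    · exact H1.2 f hf hne ⟨H1.1.1, c, hc, v, hb, hcv⟩
    · exact H2.2 f hf hne ⟨H2.1.1, c, hc, v, hw, hcv⟩
  rw [aux_mem_PC]
  refine ⟨?_, key⟩
  obtain ⟨f, hf, hcf⟩ := aux_cover G M hmax s(b, w) hbw
  by_cases hfe : f = e
  · exact hfe ▸ hcf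
  · exact absurd hcf (key f hf hfe)

theorem aux_Q [Fintype V] (G : SimpleGraph V) (d F k : ℕ)
    (hΔ : ∀ v : V, G.degree v ≤ d)
    (hF : ∀ e ∈ G.edgeSet, F ≤ (CSet G e).ncard)
    (hk : ∀ u v : V, G.Adj u v → k ≤ (G.neighborFinset u ∩ G.neighborFinset v).card)
    (x y : V) (hxy : G.Adj x y) (P : Set (Sym2 V)) 
    (hPC : P ⊆ CSet G s(x, y))
    (hX : ∀ h1 ∈ P, ∀ h2 ∈ P, ∀ b ∈ h1, ∀ w ∈ h2, G.Adj b w → s(b, w) ∈ P)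
    (hst : ∀ h1 ∈ P, ∀ h2 ∈ P, h1 ≠ h2 → Conflict G h1 h2) :
    (G.edgeFinset.filter (fun e => e ∈ P ∧ ∃ α w, e = s(α, w) ∧ G.Adj x α ∧
      ¬ G.Adj x w ∧ ¬ G.Adj y w)).card + F + d + 3 * k ≤ 2 * d ^ 2 := by
  set B : V → Finset V := fun a => Finset.univ.filter
    (fun b => s(a, b) ∈ P ∧ ¬ G.Adj x b ∧ ¬ G.Adj y b) with hB
  obtain ⟨a, ha, hamax⟩ := Finset.exists_max_image (G.neighborFinset x) (fun a => (B a).card)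
    ⟨y, by simpa using hxy⟩
  rw [SimpleGraph.mem_neighborFinset] at ha
  refine aux_side G d F k hΔ hF hk x a ha _ (Finset.filter_subset _ _) ?_
  intro e he
  obtain ⟨-, heP, α, w, rfl, hα, hxw, hyw⟩ := Finset.mem_filter.1 he
  refine ⟨α, w, rfl, hα, hxw, ?_, ?_⟩
  · rintro rfl
    exact hyw hxy.symm
  by_contra hcon
  push Not at hcon
  obtain ⟨haw, haα⟩ := hcon
  have hαw : G.Adj α w := (hPC heP).1
  have hsub : B a ⊂ B α := by
    rw [Finset.ssubset_iff_of_subset]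
    · refine ⟨w, ?_, ?_⟩
      · simp [hB, heP, hxw, hyw]
      · intro h
        have := (Finset.mem_filter.1 h).2.1
        exact haw (hPC this).1
    · intro b hb
      obtain ⟨-, habP, hxb, hyb⟩ := Finset.mem_filter.1 hb
      have hab : G.Adj a b := (hPC habP).1
      have hbα : G.Adj b α := by
        have hne : s(a, b) ≠ s(α, w) := by
          intro h
          have : w ∈ s(a, b) := by rw [h]; simp
          rw [Sym2.mem_iff] at this
          rcases this with rfl | rfl
          · exact hxw ha
          · exact haw hab
        obtain ⟨p, hp, q, hq, hpq⟩ := hst _ habP _ heP hne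
        rw [Sym2.mem_iff] at hp hq
        rcases hp with rfl | rfl <;> rcases hq with rfl | rfl <;> rcases hpq with h | h
        · subst h; exact absurd hαw haw
        · exact absurd h haα
        · subst h; exact absurd ha hxw
        · exact absurd h haw
        · subst h; exact absurd hα hxb
        · exact h
        · subst h; exact absurd hab haw
        · exfalso
          have := hPC (hX _ habP _ heP p (by simp) q (by simp) h)
          rw [aux_cset G x y hxy] at this
          simp only [Finset.coe_filter, Set.mem_ofPred_eq, Sym2.mem_iff, Finset.mem_union,
            SimpleGraph.mem_neighborFinset] at this
          obtain ⟨-, v, rfl | rfl, hv⟩ := this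
          · tauto
          · tauto
      have := hX _ heP _ habP α (by simp) b (by simp) hbα.symm
      simp [hB, this, hxb, hyb]
  have h1 := Finset.card_lt_card hsub
  have h2 := hamax α (by simpa using hα)
  omega

theorem aux_per [Fintype V] (G : SimpleGraph V) (d F k : ℕ)
    (hΔ : ∀ v : V, G.degree v ≤ d)
    (hF : ∀ e ∈ G.edgeSet, F ≤ (CSet G e).ncard)
    (hk : ∀ u v : V, G.Adj u v → k ≤ (G.neighborFinset u ∩ G.neighborFinset v).card)
    (x y : V) (hxy : G.Adj x y) (P : Set (Sym2 V)) 
    (hPC : P ⊆ CSet G s(x, y))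
    (hX : ∀ h1 ∈ P, ∀ h2 ∈ P, ∀ b ∈ h1, ∀ w ∈ h2, G.Adj b w → s(b, w) ∈ P)
    (hst : ∀ h1 ∈ P, ∀ h2 ∈ P, h1 ≠ h2 → Conflict G h1 h2) :
    (CSet G s(x, y)).ncard + P.ncard + 2 * F + (d + 6) * k + 2 * d ≤ 6 * d ^ 2 := by
  have hx := aux_Q G d F k hΔ hF hk x y hxy P hPC hX hst
  have hy := aux_Q G d F k hΔ hF hk y x hxy.symm P (by rwa [Sym2.eq_swap]) hX hst
  have hc := aux_edge G d hΔ x y hxy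
  have hkk := hk x y hxy
  set Qx := (G.edgeFinset.filter (fun e => e ∈ P ∧ ∃ α w, e = s(α, w) ∧ G.Adj x α ∧
      ¬ G.Adj x w ∧ ¬ G.Adj y w)) with hQx
  set Qy := (G.edgeFinset.filter (fun e => e ∈ P ∧ ∃ α w, e = s(α, w) ∧ G.Adj y α ∧
      ¬ G.Adj y w ∧ ¬ G.Adj x w)) with hQy
  set E := (G.edgeFinset.filter
          (fun e => ∀ w ∈ e, w ∈ G.neighborFinset x ∪ G.neighborFinset y)) with hE
  have hP : P ⊆ ((E ∪ (Qx ∪ Qy) : Finset (Sym2 V)) : Set (Sym2 V)) := by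
    intro e heP
    have he := hPC heP
    rw [aux_cset G x y hxy] at he
    simp only [Finset.coe_filter, Set.mem_ofPred_eq, Finset.mem_union,
            SimpleGraph.mem_neighborFinset] at he
    obtain ⟨heG, v, hv, hvS⟩ := he
    obtain ⟨w, rfl⟩ := Sym2.mem_iff_exists.1 hv
    rw [Finset.mem_coe, Finset.mem_union, Finset.mem_union]
    by_cases hw : G.Adj x w ∨ G.Adj y w
    · left
      rw [hE, Finset.mem_filter]
      refine ⟨heG, ?_⟩
      intro u hu
      rw [Sym2.mem_iff] at hu
      rw [Finset.mem_union, SimpleGraph.mem_neighborFinset, SimpleGraph.mem_neighborFinset]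
      rcases hu with rfl | rfl
      · exact hvS
      · exact hw
    · push Not at hw
      right
      rcases hvS with h | h
      · left
        rw [hQx, Finset.mem_filter]
        exact ⟨heG, heP, v, w, rfl, h, hw.1, hw.2⟩
      · right
        rw [hQy, Finset.mem_filter]
        exact ⟨heG, heP, v, w, rfl, h, hw.2, hw.1⟩
  have hPn : P.ncard ≤ E.card + (Qx.card + Qy.card) := by
    have h1 := Set.ncard_le_ncard hP (Finset.finite_toSet _)
    rw [Set.ncard_coe_finset] at h1
    exact h1.trans ((Finset.card_union_le _ _).trans
      (Nat.add_le_add_left (Finset.card_union_le _ _) _))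
  have h1 : d * (G.degree x + G.degree y) ≤ 2 * d ^ 2 := by
    have := hΔ x
    have := hΔ y
    nlinarith
  have h2 : d * k ≤ d * (G.neighborFinset x ∩ G.neighborFinset y).card :=
    Nat.mul_le_mul_left _ hkk
  rw [add_mul]
  omega

theorem aux_count [Fintype V] (G : SimpleGraph V) (M : Finset (Sym2 V))
    (hmax : IsMaximalInducedMatching G (M : Set (Sym2 V))) :
    2 * G.edgeFinset.card ≤ ∑ e ∈ M, ((CSet G e).ncard + (PCSet G (M : Set (Sym2 V)) e).ncard) := by
  have hcard : ∀ A : Set (Sym2 V), A ⊆ G.edgeSet →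
      A.ncard = (G.edgeFinset.filter (fun h => h ∈ A)).card := by
    intro A hA
    rw [← Set.ncard_coe_finset]
    congr 1
    ext h
    simp only [Finset.coe_filter, Set.mem_ofPred_eq, SimpleGraph.mem_edgeFinset]
    exact ⟨fun hh => ⟨hA hh, hh⟩, fun hh => hh.2⟩
  have hC : ∀ e, (CSet G e).ncard = (G.edgeFinset.filter (fun h => h ∈ CSet G e)).card :=
    fun e => hcard _ fun h hh => hh.1
  have hPC : ∀ e, (PCSet G (M : Set (Sym2 V)) e).ncard
      = (G.edgeFinset.filter (fun h => h ∈ PCSet G (M : Set (Sym2 V)) e)).card :=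
    fun e => hcard _ fun h hh => hh.1.1
  have s1 : ∑ e ∈ M, (G.edgeFinset.filter (fun h => h ∈ CSet G e)).card
      = ∑ h ∈ G.edgeFinset, (M.filter (fun e => h ∈ CSet G e)).card :=
    Finset.sum_card_bipartiteAbove_eq_sum_card_bipartiteBelow
      (fun (e : Sym2 V) (h : Sym2 V) => h ∈ CSet G e)
  have s2 : ∑ e ∈ M, (G.edgeFinset.filter (fun h => h ∈ PCSet G (M : Set (Sym2 V)) e)).card
      = ∑ h ∈ G.edgeFinset, (M.filter (fun e => h ∈ PCSet G (M : Set (Sym2 V)) e)).card :=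
    Finset.sum_card_bipartiteAbove_eq_sum_card_bipartiteBelow
      (fun (e : Sym2 V) (h : Sym2 V) => h ∈ PCSet G (M : Set (Sym2 V)) e)
  rw [Finset.sum_add_distrib, Finset.sum_congr rfl (fun e _ => hC e),
    Finset.sum_congr rfl (fun e _ => hPC e), s1, s2, ← Finset.sum_add_distrib, mul_comm,
    ← smul_eq_mul]
  apply Finset.card_nsmul_le_sum
  intro h hh
  obtain ⟨e, he, hce⟩ := aux_cover G _ hmax h (by simpa using hh)
  have he' : e ∈ M := by simpa using he
  by_cases hex : ∃ f ∈ M, f ≠ e ∧ h ∈ CSet G f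
  · obtain ⟨f, hf, hne, hcf⟩ := hex
    have : ({e, f} : Finset (Sym2 V)) ⊆ M.filter (fun e => h ∈ CSet G e) := by
      intro z hz
      simp only [Finset.mem_insert, Finset.mem_singleton] at hz
      rw [Finset.mem_filter]
      rcases hz with rfl | rfl
      · exact ⟨he', hce⟩
      · exact ⟨hf, hcf⟩
    have := Finset.card_le_card this
    rw [Finset.card_pair hne.symm] at this
    omega
  · push Not at hex
    have h1 : 0 < (M.filter (fun e => h ∈ CSet G e)).card :=
      Finset.card_pos.2 ⟨e, Finset.mem_filter.2 ⟨he', hce⟩⟩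
    have h2 : 0 < (M.filter (fun e => h ∈ PCSet G (M : Set (Sym2 V)) e)).card :=
      Finset.card_pos.2 ⟨e, Finset.mem_filter.2 ⟨he', (aux_mem_PC _ _ _ _).2
        ⟨hce, fun f hf hne => hex f (by simpa using hf) hne⟩⟩⟩
    omega

/-- lower bound on the size of a locally optimal induced matching. -/
theorem stmt6 [Fintype V] (G : SimpleGraph V) (d : ℕ) (hd : 3 ≤ d)
    (hΔ : ∀ v : V, (G.neighborSet v).ncard ≤ d)
    (M : Set (Sym2 V)) (hmax : IsMaximalInducedMatching G M) (hstab : LSStable G M)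
    (f g : ℝ)
    (hf : ∀ e ∈ G.edgeSet, f ≤ ((CSet G e).ncard : ℝ))
    (hg : ∀ x y : V, G.Adj x y → g ≤ ((G.neighborSet x ∩ G.neighborSet y).ncard : ℝ)) :
    (M.ncard : ℝ) ≥
      (G.edgeSet.ncard : ℝ) / (3 * d ^ 2 - d - f - ((d + 6) / 2) * g) := by
  have hΔ' : ∀ v : V, G.degree v ≤ d := by
    intro v
    rw [← G.card_neighborFinset_eq_degree, ← Set.ncard_coe_finset, G.coe_neighborFinset]
    exact hΔ v
  have hF : ∀ e ∈ G.edgeSet, ⌈f⌉₊ ≤ (CSet G e).ncard := fun e he => Nat.ceil_le.2 (hf e he)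
  have hk : ∀ u v : V, G.Adj u v →
      ⌈g⌉₊ ≤ (G.neighborFinset u ∩ G.neighborFinset v).card := by
    intro u v huv
    rw [← Set.ncard_coe_finset, Finset.coe_inter, G.coe_neighborFinset, G.coe_neighborFinset]
    exact Nat.ceil_le.2 (hg u v huv)
  obtain ⟨N, rfl⟩ : ∃ N : Finset (Sym2 V), M = (N : Set (Sym2 V)) :=
    ⟨(Set.toFinite M).toFinset, by simp⟩
  have hcount := aux_count G N hmax
  have hper : ∀ e ∈ N, (CSet G e).ncard + (PCSet G (N : Set (Sym2 V)) e).ncard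
      + 2 * ⌈f⌉₊ + (d + 6) * ⌈g⌉₊ + 2 * d ≤ 6 * d ^ 2 := by
    intro e he
    have heG := hmax.1.1 (Finset.mem_coe.2 he)
    have hst := hstab e he
    have hX := aux_X G _ hmax e
    induction e using Sym2.ind with
    | _ x y =>
      exact aux_per G d _ _ hΔ' hF hk x y heG _ (fun h hh => hh.1)
        (fun h1 H1 h2 H2 b hb w hw hbw => hX h1 h2 H1 H2 b w hb hw hbw)
        (fun h1 H1 h2 H2 hne => (hst h1 H1 h2 H2 hne).2)
  set D : ℝ := 3 * d ^ 2 - d - f - ((d + 6) / 2) * g with hD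
  have hperR : ∀ e ∈ N, (((CSet G e).ncard + (PCSet G (N : Set (Sym2 V)) e).ncard : ℕ) : ℝ)
      ≤ 2 * D := by
    intro e he
    have h1 : (((CSet G e).ncard + (PCSet G (N : Set (Sym2 V)) e).ncard
      + 2 * ⌈f⌉₊ + (d + 6) * ⌈g⌉₊ + 2 * d : ℕ) : ℝ) ≤ ((6 * d ^ 2 : ℕ) : ℝ) := by
      exact_mod_cast hper e he
    push_cast at h1 ⊢
    have hf' := Nat.le_ceil f
    have hg' : ((d : ℝ) + 6) * g ≤ (d + 6) * (⌈g⌉₊ : ℝ) :=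
      mul_le_mul_of_nonneg_left (Nat.le_ceil g) (by positivity)
    rw [hD]
    linarith
  have hm : G.edgeSet.ncard = G.edgeFinset.card := by
    rw [← Set.ncard_coe_finset, G.coe_edgeFinset]
  have hfin : (G.edgeSet.ncard : ℝ) ≤ N.card * D := by
    have h1 : ((2 * G.edgeFinset.card : ℕ) : ℝ) ≤ 
      ((∑ e ∈ N, ((CSet G e).ncard + (PCSet G (N : Set (Sym2 V)) e).ncard) : ℕ) : ℝ) := by
      exact_mod_cast hcount
    rw [Nat.cast_sum] at h1
    have h2 := Finset.sum_le_card_nsmul N _ _ hperR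
    rw [nsmul_eq_mul] at h2
    rw [hm]
    push_cast at h1 h2
    linarith
  rw [Set.ncard_coe_finset, ge_iff_le]
  rcases Finset.eq_empty_or_nonempty N with h0 | ⟨e, he⟩
  · subst h0
    have : (G.edgeSet.ncard : ℝ) = 0 := by
      apply le_antisymm
      · simpa using hfin
      · positivity
    rw [this]
    simp
  · have hDpos : 0 < D := by
      have h1 := hperR e he
      have h2 : 0 < (CSet G e).ncard :=
        (Set.ncard_pos (Set.toFinite _)).2
          ⟨e, hmax.1.1 (Finset.mem_coe.2 he), aux_conflict_self G e⟩
      have h3 : (0 : ℝ) < (((CSet G e).ncard + (PCSet G (N : Set (Sym2 V)) e).ncard : ℕ) : ℝ) := by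
        exact_mod_cast Nat.add_pos_left h2 _
      linarith
    rw [div_le_iff₀ hDpos]
    exact hfin
end

section
/- Let G be a C₄-free graph of maximum degree at most d (d ≥ 3), and let M be an induced matching of G that is maximal and stable under the local-search exchange operation (for every e ∈ M, any two edges in PC_G(M, e) conflict with each other). Then |M| ≥ m(G) / max{d² + d/2, (9/8)d²}. -/
open Classical

variable {V : Type*}

theorem aux_count_s7 [Fintype V] (G : SimpleGraph V) (N : Finset V) (P : V → Prop)
    (C PC : Finset (Sym2 V))
    (hC : ∀ f ∈ C, f ∈ G.edgeSet ∧ ∃ w ∈ N, w ∈ f)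
    (hPC : ∀ f ∈ PC, f ∈ G.edgeSet ∧ (∃ w ∈ N, w ∈ f) ∧ ∀ w ∈ f, P w) :
    C.card + PC.card ≤ ∑ w ∈ N, ((Finset.univ.filter (fun y => G.Adj w y)).card +
      (Finset.univ.filter (fun y => y ∉ N ∧ P y ∧ P w ∧ G.Adj w y)).card) := by
  set Din := (N ×ˢ N).filter (fun q => G.Adj q.1 q.2) with hDin
  set Dout := (N ×ˢ Finset.univ).filter (fun q => q.2 ∉ N ∧ G.Adj q.1 q.2) with hDout
  set DP := (N ×ˢ Finset.univ).filter
    (fun q => q.2 ∉ N ∧ P q.2 ∧ P q.1 ∧ G.Adj q.1 q.2) with hDP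
  let E : V × V → Sym2 V := fun q => s(q.1, q.2)
  have h2 : 2 * (Din.image E).card ≤ Din.card := by
    apply Finset.mul_card_image_le_card
    intro b hb
    obtain ⟨⟨x, y⟩, hq, rfl⟩ := Finset.mem_image.1 hb
    simp only [hDin, Finset.mem_filter, Finset.mem_product] at hq
    obtain ⟨⟨hx, hy⟩, hadj⟩ := hq
    have hne : ((x, y) : V × V) ≠ (y, x) := by
      intro h
      exact hadj.ne (Prod.ext_iff.1 h).1
    rw [← Finset.card_pair hne]
    apply Finset.card_le_card
    intro z hz
    simp only [Finset.mem_insert, Finset.mem_singleton] at hz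
    rcases hz with rfl | rfl
    · simp [hDin, hx, hy, hadj]
    · simp [hDin, hx, hy, hadj.symm, E]
  have hCc : C.card ≤ (Din.image E).card + Dout.card := by
    calc C.card ≤ (Din.image E ∪ Dout.image E).card := by
          apply Finset.card_le_card
          intro f hf
          obtain ⟨he, w, hw, hwf⟩ := hC f hf
          obtain ⟨y, rfl⟩ := Sym2.mem_iff_exists.1 hwf
          have hadj : G.Adj w y := by simpa using he
          rw [Finset.mem_union]
          by_cases hy : y ∈ N
          · left
            exact Finset.mem_image.2 ⟨(w, y), by simp [hDin, hw, hy, hadj], rfl⟩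
          · right
            exact Finset.mem_image.2 ⟨(w, y), by simp [hDout, hw, hy, hadj], rfl⟩
      _ ≤ (Din.image E).card + (Dout.image E).card := Finset.card_union_le _ _
      _ ≤ _ := by gcongr; exact Finset.card_image_le
  have hPc : PC.card ≤ (Din.image E).card + DP.card := by
    calc PC.card ≤ (Din.image E ∪ DP.image E).card := by
          apply Finset.card_le_card
          intro f hf
          obtain ⟨he, ⟨w, hw, hwf⟩, hp⟩ := hPC f hf
          obtain ⟨y, rfl⟩ := Sym2.mem_iff_exists.1 hwf
          have hadj : G.Adj w y := by simpa using he
          have hpw : P w := hp w (by simp)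
          have hpy : P y := hp y (by simp)
          rw [Finset.mem_union]
          by_cases hy : y ∈ N
          · left
            exact Finset.mem_image.2 ⟨(w, y), by simp [hDin, hw, hy, hadj], rfl⟩
          · right
            exact Finset.mem_image.2 ⟨(w, y), by simp [hDP, hw, hy, hadj, hpw, hpy], rfl⟩
      _ ≤ (Din.image E).card + (DP.image E).card := Finset.card_union_le _ _
      _ ≤ _ := by gcongr; exact Finset.card_image_le
  have hsum : ∀ Q : V × V → Prop, ((N ×ˢ Finset.univ).filter Q).card =
      ∑ w ∈ N, (Finset.univ.filter (fun y => Q (w, y))).card := by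
    intro Q
    simp only [Finset.card_filter]
    rw [Finset.sum_product]
  have e1 : Din.card + Dout.card = ∑ w ∈ N, (Finset.univ.filter (fun y => G.Adj w y)).card := by
    rw [← hsum (fun q => G.Adj q.1 q.2)]
    rw [← Finset.card_union_of_disjoint]
    · congr 1
      ext ⟨x, y⟩
      simp only [hDin, hDout, Finset.mem_union, Finset.mem_filter, Finset.mem_product,
        Finset.mem_univ]
      tauto
    · rw [Finset.disjoint_left]
      rintro ⟨x, y⟩ h1 h2
      simp only [hDin, hDout, Finset.mem_filter, Finset.mem_product] at h1 h2
      tauto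
  have e2 : DP.card = ∑ w ∈ N,
      (Finset.univ.filter (fun y => y ∉ N ∧ P y ∧ P w ∧ G.Adj w y)).card := by
    convert hsum (fun q => q.2 ∉ N ∧ P q.2 ∧ P q.1 ∧ G.Adj q.1 q.2)
  rw [Finset.sum_add_distrib, ← e1, ← e2]
  omega

/-- the bound on the private edges leaving the neighbourhood -/
theorem aux_half [Fintype V] (G : SimpleGraph V) (d : ℕ)
    (hΔ : ∀ v : V, (Finset.univ.filter (fun y => G.Adj v y)).card ≤ d) (hC4 : C4Free G)
    (u v : V) (P : V → Prop)
    (hW : ∀ x y, P x → P y → x ≠ u → x ≠ v → ¬ G.Adj u x → ¬ G.Adj v x →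
      y ≠ u → y ≠ v → ¬ G.Adj u y → ¬ G.Adj v y → ¬ G.Adj x y)
    (hS : ∀ a x b y, P a → P x → P b → P y → G.Adj a x → G.Adj b y →
      (G.Adj u a ∨ G.Adj v a) → (G.Adj u b ∨ G.Adj v b) → a ≠ b → a ≠ y →
      G.Adj a b ∨ G.Adj a y ∨ x = b ∨ G.Adj x b ∨ x = y ∨ G.Adj x y) :
    ∀ F : V → Finset V, (∀ w y, y ∈ F w ↔ (P w ∧ P y ∧ G.Adj w y ∧
      y ≠ u ∧ y ≠ v ∧ ¬ G.Adj u y ∧ ¬ G.Adj v y)) →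
    ∀ A : Finset V, (∀ a ∈ A, G.Adj u a ∧ ¬ G.Adj v a ∧ a ≠ v) →
    4 * ∑ a ∈ A, (F a).card ≤ d ^ 2 := by
  intro F hF A hA
  set A1 := A.filter (fun a => (F a).Nonempty) with hA1
  have hs : ∑ a ∈ A, (F a).card = ∑ a ∈ A1, (F a).card := by
    symm
    apply Finset.sum_subset (Finset.filter_subset _ _)
    intro x hx hx1
    simp only [hA1, Finset.mem_filter, hx, true_and, Finset.not_nonempty_iff_eq_empty] at hx1
    simp [hx1]
  have hcl : ∀ a ∈ A1, ∀ b ∈ A1, a ≠ b → G.Adj a b := by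
    intro a ha b hb hab
    obtain ⟨haA, x, hx⟩ := Finset.mem_filter.1 ha
    obtain ⟨hbA, y, hy⟩ := Finset.mem_filter.1 hb
    simp only [hF] at hx hy
    obtain ⟨pa, px, ax, xu, xv, ux, vx⟩ := hx
    obtain ⟨pb, py, by', yu, yv, uy, vy⟩ := hy
    obtain ⟨ua, va, av⟩ := hA a haA
    obtain ⟨ub, vb, bv⟩ := hA b hbA
    by_contra hnab
    have hcom : ∀ z, G.Adj a z → G.Adj b z → z ≠ u → ¬ G.Adj u z → False := by
      intro z h1 h2 h3 h4
      exact hC4 ⟨u, a, z, b, ua, h1, h2.symm, ub.symm, h4, hnab, h3.symm, hab⟩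
    have ay : a ≠ y := by rintro rfl; exact uy ua
    rcases hS a x b y pa px pb py ax by' (Or.inl ua) (Or.inl ub) hab ay with
      h | h | h | h | h | h
    · exact hnab h
    · exact hcom y h by' yu uy
    · exact ux (h ▸ ub)
    · exact hcom x ax h.symm xu ux
    · exact hcom x ax (h ▸ by') xu ux
    · exact hW x y px py xu xv ux vx yu yv uy vy h
  have hf : ∀ a ∈ A1, (F a).card + A1.card ≤ d := by
    intro a ha
    have haA := (Finset.mem_filter.1 ha).1
    obtain ⟨ua, va, av⟩ := hA a haA
    have hdis : Disjoint (F a) (insert u (A1.erase a)) := by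
      rw [Finset.disjoint_left]
      intro y hy hy2
      simp only [hF] at hy
      rcases Finset.mem_insert.1 hy2 with h | h
      · exact hy.2.2.2.1 h
      · have := (Finset.mem_filter.1 (Finset.mem_of_mem_erase h)).1
        exact hy.2.2.2.2.2.1 (hA y this).1
    have hu : u ∉ A1.erase a := by
      intro h
      have := (Finset.mem_filter.1 (Finset.mem_of_mem_erase h)).1
      exact G.loopless.irrefl _ (hA u this).1
    have hcard : (insert u (A1.erase a)).card = A1.card := by
      rw [Finset.card_insert_of_notMem hu, Finset.card_erase_add_one ha]
    rw [← hcard, ← Finset.card_union_of_disjoint hdis]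
    refine le_trans (Finset.card_le_card ?_) (hΔ a)
    intro y hy
    simp only [Finset.mem_filter, Finset.mem_univ, true_and]
    rcases Finset.mem_union.1 hy with h | h
    · simp only [hF] at h
      exact h.2.2.1
    · rcases Finset.mem_insert.1 h with h | h
      · exact h ▸ ua.symm
      · exact hcl a ha y (Finset.mem_of_mem_erase h) (Finset.ne_of_mem_erase h).symm
  rw [hs]
  have h1 : ∑ a ∈ A1, (F a).card ≤ A1.card * (d - A1.card) := by
    rw [← smul_eq_mul]
    apply Finset.sum_le_card_nsmul
    intro a ha
    have := hf a ha
    omega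
  rcases le_total A1.card d with h | h
  · obtain ⟨k, hk⟩ := Nat.exists_eq_add_of_le h
    have : d - A1.card = k := by omega
    rw [this] at h1
    rw [hk]
    zify at *
    nlinarith [sq_nonneg ((A1.card : ℤ) - k)]
  · have : d - A1.card = 0 := by omega
    rw [this] at h1
    simp only [mul_zero, Nat.le_zero, Finset.sum_eq_zero_iff] at h1
    rw [Finset.sum_eq_zero h1]
    positivity


theorem aux_leave [Fintype V] (G : SimpleGraph V) (d : ℕ) (hd : 3 ≤ d)
    (hΔ : ∀ v : V, (Finset.univ.filter (fun y => G.Adj v y)).card ≤ d) (hC4 : C4Free G)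
    (u v : V) (huv : G.Adj u v) (P : V → Prop) (hPu : P u) (hPv : P v)
    (hW : ∀ x y, P x → P y → x ≠ u → x ≠ v → ¬ G.Adj u x → ¬ G.Adj v x →
      y ≠ u → y ≠ v → ¬ G.Adj u y → ¬ G.Adj v y → ¬ G.Adj x y)
    (hS : ∀ a x b y, P a → P x → P b → P y → G.Adj a x → G.Adj b y →
      (G.Adj u a ∨ G.Adj v a) → (G.Adj u b ∨ G.Adj v b) → a ≠ b → a ≠ y →
      G.Adj a b ∨ G.Adj a y ∨ x = b ∨ G.Adj x b ∨ x = y ∨ G.Adj x y)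
    (F : V → Finset V) (hF : ∀ w y, y ∈ F w ↔ (P w ∧ P y ∧ G.Adj w y ∧
      y ≠ u ∧ y ≠ v ∧ ¬ G.Adj u y ∧ ¬ G.Adj v y))
    (A B : Finset V) (hA : ∀ a ∈ A, G.Adj u a ∧ ¬ G.Adj v a ∧ a ≠ v)
    (hB : ∀ a ∈ B, G.Adj v a ∧ ¬ G.Adj u a ∧ a ≠ u)
    (hAd : A.card + 1 ≤ d) (hBd : B.card + 1 ≤ d) (g : V → ℕ)
    (hg0 : ∀ w, ¬ P w → g w = 0) (hgA : ∀ w ∈ A, g w ≤ 1 + (F w).card)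
    (hgB : ∀ w ∈ B, g w ≤ 1 + (F w).card) :
    4 * (∑ w ∈ A, g w + ∑ w ∈ B, g w) + 8 ≤ max (d ^ 2) (4 * d) + 8 * d := by
  have hhA := aux_half G d hΔ hC4 u v P hW hS F hF A hA
  have hhB := aux_half G d hΔ hC4 v u P
    (fun x y a b c d e f g h i j => hW x y a b d c f e h g j i)
    (fun a x b y h1 h2 h3 h4 h5 h6 h7 h8 => hS a x b y h1 h2 h3 h4 h5 h6 h7.symm h8.symm)
    F (fun w y => by rw [hF]; tauto) B hB
  have hsA : ∑ w ∈ A, g w ≤ A.card + ∑ w ∈ A, (F w).card := by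
    refine (Finset.sum_le_sum hgA).trans ?_
    rw [Finset.sum_add_distrib]; simp
  have hsB : ∑ w ∈ B, g w ≤ B.card + ∑ w ∈ B, (F w).card := by
    refine (Finset.sum_le_sum hgB).trans ?_
    rw [Finset.sum_add_distrib]; simp
  have hnoAB : ∀ a ∈ A, ∀ b ∈ B, ¬ G.Adj a b := by
    intro a ha b hb hab
    obtain ⟨ua, va, av⟩ := hA a ha
    obtain ⟨vb, ub, bu⟩ := hB b hb
    exact hC4 ⟨u, a, b, v, ua, hab, vb.symm, huv.symm, ub, fun h => va h.symm, bu.symm, av⟩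
  have kA : ∀ a ∈ A, ∀ x ∈ F a, ∀ b ∈ B, P b → x ∈ F b := by
    intro a ha x hx b hb pb
    obtain ⟨ua, va, av⟩ := hA a ha
    obtain ⟨vb, ub, bu⟩ := hB b hb
    obtain ⟨pa, px, ax, xu, xv, ux, vx⟩ := (hF _ _).1 hx
    have hab : a ≠ b := by rintro rfl; exact va vb
    rcases hS a x b v pa px pb hPv ax vb.symm (Or.inl ua) (Or.inr vb) hab av with
      h | h | h | h | h | h
    · exact absurd h (hnoAB a ha b hb)
    · exact absurd h.symm va
    · exact absurd (h ▸ vb) vx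
    · exact (hF _ _).2 ⟨pb, px, h.symm, xu, xv, ux, vx⟩
    · exact absurd h xv
    · exact absurd h.symm vx
  have kB : ∀ b ∈ B, ∀ x ∈ F b, ∀ a ∈ A, P a → x ∈ F a := by
    intro b hb x hx a ha pa
    obtain ⟨ua, va, av⟩ := hA a ha
    obtain ⟨vb, ub, bu⟩ := hB b hb
    obtain ⟨pb, px, bx, xu, xv, ux, vx⟩ := (hF _ _).1 hx
    have hab : b ≠ a := by rintro rfl; exact va vb
    rcases hS b x a u pb px pa hPu bx ua.symm (Or.inr vb) (Or.inl ua) hab bu with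
      h | h | h | h | h | h
    · exact absurd h.symm (hnoAB a ha b hb)
    · exact absurd h.symm ub
    · exact absurd (h ▸ ua) ux
    · exact (hF _ _).2 ⟨pa, px, h.symm, xu, xv, ux, vx⟩
    · exact absurd h xu
    · exact absurd h.symm ux
  have m1 : d ^ 2 ≤ max (d ^ 2) (4 * d) := le_max_left _ _
  have m2 : 4 * d ≤ max (d ^ 2) (4 * d) := le_max_right _ _
  by_cases hcA : ∀ a ∈ A, ¬ P a
  · have : ∑ w ∈ A, g w = 0 := Finset.sum_eq_zero fun w hw => hg0 w (hcA w hw)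
    omega
  by_cases hcB : ∀ b ∈ B, ¬ P b
  · have : ∑ w ∈ B, g w = 0 := Finset.sum_eq_zero fun w hw => hg0 w (hcB w hw)
    omega
  push Not at hcA hcB
  obtain ⟨a, ha, pa⟩ := hcA
  obtain ⟨b, hb, pb⟩ := hcB
  by_cases hx : ∃ x, x ∈ F a
  · obtain ⟨x, hxa⟩ := hx
    have hxb := kA a ha x hxa b hb pb
    have hab : a ≠ b := by rintro rfl; exact (hA a ha).2.1 (hB a hb).1
    have huniq : ∀ y, y ∈ F a → y ∈ F b → y = x := by
      intro y hya hyb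
      by_contra hne
      obtain ⟨-, px, ax, xu, xv, ux, vx⟩ := (hF _ _).1 hxa
      obtain ⟨-, py, ay, yu, yv, uy, vy⟩ := (hF _ _).1 hya
      obtain ⟨-, -, bx, -⟩ := (hF _ _).1 hxb
      obtain ⟨-, -, bY, -⟩ := (hF _ _).1 hyb
      exact hC4 ⟨a, x, b, y, ax, bx.symm, bY, ay.symm, hnoAB a ha b hb,
        hW x y px py xu xv ux vx yu yv uy vy, hab, Ne.symm hne⟩
    have hFA : ∀ w ∈ A, (F w).card ≤ 1 := by
      intro w hw
      have : Nonempty V := ⟨x⟩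
      rw [Finset.card_le_one_iff_subset_singleton]
      refine ⟨x, fun y hy => ?_⟩
      have h1 := kA w hw y hy b hb pb
      simp [huniq y (kB b hb y h1 a ha pa) h1]
    have hFB : ∀ w ∈ B, (F w).card ≤ 1 := by
      intro w hw
      have : Nonempty V := ⟨x⟩
      rw [Finset.card_le_one_iff_subset_singleton]
      refine ⟨x, fun y hy => ?_⟩
      have h1 := kB w hw y hy a ha pa
      simp [huniq y h1 (kA a ha y h1 b hb pb)]
    have hdisj : Disjoint (A.filter P) (B.filter P) := by
      rw [Finset.disjoint_left]
      intro w h1 h2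
      exact (hA w (Finset.mem_filter.1 h1).1).2.1 (hB w (Finset.mem_filter.1 h2).1).1
    have hcard : (A.filter P).card + (B.filter P).card ≤ d := by
      rw [← Finset.card_union_of_disjoint hdisj]
      refine (Finset.card_le_card ?_).trans (hΔ x)
      intro w hw
      simp only [Finset.mem_filter, Finset.mem_univ, true_and]
      rcases Finset.mem_union.1 hw with h | h
      · obtain ⟨h1, h2⟩ := Finset.mem_filter.1 h
        exact ((hF _ _).1 (kB b hb x hxb w h1 h2)).2.2.1.symm
      · obtain ⟨h1, h2⟩ := Finset.mem_filter.1 h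
        exact ((hF _ _).1 (kA a ha x hxa w h1 h2)).2.2.1.symm
    have key : ∀ S : Finset V, (∀ w ∈ S, g w ≤ 1 + (F w).card) → (∀ w ∈ S, (F w).card ≤ 1) →
        ∑ w ∈ S, g w ≤ 2 * (S.filter P).card := by
      intro S h1 h2
      have : ∑ w ∈ S, g w = ∑ w ∈ S.filter P, g w := by
        symm
        apply Finset.sum_subset (Finset.filter_subset _ _)
        intro w hw hw2
        apply hg0
        intro hp
        exact hw2 (Finset.mem_filter.2 ⟨hw, hp⟩)
      rw [this, mul_comm, ← smul_eq_mul]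
      apply Finset.sum_le_card_nsmul
      intro w hw
      have hw := (Finset.mem_filter.1 hw).1
      have := h1 w hw
      have := h2 w hw
      omega
    have := key A hgA hFA
    have := key B hgB hFB
    omega
  · have eA : ∑ w ∈ A, (F w).card = 0 := by
      apply Finset.sum_eq_zero
      intro w hw
      rw [Finset.card_eq_zero, Finset.eq_empty_iff_forall_notMem]
      intro y hy
      exact hx ⟨y, kB b hb y (kA w hw y hy b hb pb) a ha pa⟩
    have eB : ∑ w ∈ B, (F w).card = 0 := by
      apply Finset.sum_eq_zero
      intro w hw
      rw [Finset.card_eq_zero, Finset.eq_empty_iff_forall_notMem]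
      intro y hy
      exact hx ⟨y, kB w hw y hy a ha pa⟩
    omega

theorem aux_local [Fintype V] (G : SimpleGraph V) (d : ℕ) (hd : 3 ≤ d)
    (hΔ : ∀ v : V, (Finset.univ.filter (fun y => G.Adj v y)).card ≤ d) (hC4 : C4Free G)
    (u v : V) (huv : G.Adj u v) (P : V → Prop) (hPu : P u) (hPv : P v)
    (hW : ∀ x y, P x → P y → x ≠ u → x ≠ v → ¬ G.Adj u x → ¬ G.Adj v x →
      y ≠ u → y ≠ v → ¬ G.Adj u y → ¬ G.Adj v y → ¬ G.Adj x y)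
    (hS : ∀ a x b y, P a → P x → P b → P y → G.Adj a x → G.Adj b y →
      (G.Adj u a ∨ G.Adj v a) → (G.Adj u b ∨ G.Adj v b) → a ≠ b → a ≠ y →
      G.Adj a b ∨ G.Adj a y ∨ x = b ∨ G.Adj x b ∨ x = y ∨ G.Adj x y)
    (C PC : Finset (Sym2 V))
    (hC : ∀ f ∈ C, f ∈ G.edgeSet ∧ Conflict G s(u, v) f)
    (hPC : ∀ f ∈ PC, f ∈ G.edgeSet ∧ Conflict G s(u, v) f ∧ ∀ w ∈ f, P w) :
    4 * (C.card + PC.card) ≤ 8 * d ^ 2 + max (d ^ 2) (4 * d) := by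
  set A := Finset.univ.filter (fun w => G.Adj u w ∧ ¬ G.Adj v w ∧ w ≠ v) with hA
  set B := Finset.univ.filter (fun w => G.Adj v w ∧ ¬ G.Adj u w ∧ w ≠ u) with hB
  set T := Finset.univ.filter (fun w => G.Adj v w ∧ G.Adj u w) with hT
  set N := A ∪ B ∪ T with hN
  have hmN : ∀ w, w ∈ N ↔ (G.Adj u w ∨ G.Adj v w) ∧ w ≠ u ∧ w ≠ v := by
    intro w
    simp only [hN, hA, hB, hT, Finset.mem_union, Finset.mem_filter, Finset.mem_univ, true_and]
    constructor
    · rintro ((⟨h1, h2, h3⟩ | ⟨h1, h2, h3⟩) | ⟨h1, h2⟩)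
      · exact ⟨Or.inl h1, h1.ne', h3⟩
      · exact ⟨Or.inr h1, h3, h1.ne'⟩
      · exact ⟨Or.inl h2, h2.ne', h1.ne'⟩
    · tauto
  have hAT : A.card + T.card + 1 ≤ d := by
    have h1 : Disjoint A T := by
      rw [Finset.disjoint_left]; intro w h1 h2
      simp only [hA, hT, Finset.mem_filter] at h1 h2; tauto
    have h2 : v ∉ A ∪ T := by simp [hA, hT]
    rw [← Finset.card_union_of_disjoint h1, ← Finset.card_insert_of_notMem h2]
    refine (Finset.card_le_card ?_).trans (hΔ u)
    intro w hw
    simp only [hA, hT, Finset.mem_insert, Finset.mem_union, Finset.mem_filter, Finset.mem_univ,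
      true_and] at hw ⊢
    rcases hw with rfl | h | h
    · exact huv
    · exact h.1
    · exact h.2
  have hBT : B.card + T.card + 1 ≤ d := by
    have h1 : Disjoint B T := by
      rw [Finset.disjoint_left]; intro w h1 h2
      simp only [hB, hT, Finset.mem_filter] at h1 h2; tauto
    have h2 : u ∉ B ∪ T := by simp [hB, hT]
    rw [← Finset.card_union_of_disjoint h1, ← Finset.card_insert_of_notMem h2]
    refine (Finset.card_le_card ?_).trans (hΔ v)
    intro w hw
    simp only [hB, hT, Finset.mem_insert, Finset.mem_union, Finset.mem_filter, Finset.mem_univ,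
      true_and] at hw ⊢
    rcases hw with rfl | h | h
    · exact huv.symm
    · exact h.1
    · exact h.1
  have htouch : ∀ f ∈ G.edgeSet, Conflict G s(u, v) f → f ≠ s(u, v) → ∃ w ∈ N, w ∈ f := by
    intro f hf hc hne
    obtain ⟨p, hp, q, hq, hpq⟩ := hc
    obtain ⟨r, rfl⟩ := Sym2.mem_iff_exists.1 hq
    have hqr : G.Adj q r := by simpa using hf
    by_cases hqN : q ∈ N
    · exact ⟨q, hqN, by simp⟩
    · refine ⟨r, ?_, by simp⟩
      have hq' : q = u ∨ q = v := by
        rw [hmN] at hqN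
        rcases Sym2.mem_iff.1 hp with rfl | rfl <;> rcases hpq with h | h
        · exact Or.inl h.symm
        · tauto
        · exact Or.inr h.symm
        · tauto
      rw [hmN]
      rcases hq' with rfl | rfl
      · refine ⟨Or.inl hqr, hqr.ne', ?_⟩
        rintro rfl; exact hne rfl
      · refine ⟨Or.inr hqr, ?_, hqr.ne'⟩
        rintro rfl; exact hne Sym2.eq_swap
  have hcount := aux_count_s7 G N P (C.erase s(u, v)) (PC.erase s(u, v))
    (by
      intro f hf
      obtain ⟨h1, h2⟩ := Finset.mem_erase.1 hf
      exact ⟨(hC f h2).1, htouch f (hC f h2).1 (hC f h2).2 h1⟩)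
    (by
      intro f hf
      obtain ⟨h1, h2⟩ := Finset.mem_erase.1 hf
      exact ⟨(hPC f h2).1, htouch f (hPC f h2).1 (hPC f h2).2.1 h1, (hPC f h2).2.2⟩)
  have hc1 : C.card ≤ (C.erase s(u, v)).card + 1 := by
    have := Finset.pred_card_le_card_erase (s := C) (a := s(u, v)); omega
  have hc2 : PC.card ≤ (PC.erase s(u, v)).card + 1 := by
    have := Finset.pred_card_le_card_erase (s := PC) (a := s(u, v)); omega
  set g : V → ℕ := fun w =>
    (Finset.univ.filter (fun y => y ∉ N ∧ P y ∧ P w ∧ G.Adj w y)).card with hg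
  let F : V → Finset V := fun w => Finset.univ.filter (fun y => P w ∧ P y ∧ G.Adj w y ∧
      y ≠ u ∧ y ≠ v ∧ ¬ G.Adj u y ∧ ¬ G.Adj v y)
  have hgd : ∀ w, g w ≤ d := by
    intro w
    refine (Finset.card_le_card ?_).trans (hΔ w)
    intro y hy
    simp only [Finset.mem_filter] at hy ⊢
    tauto
  have hleave := aux_leave G d hd hΔ hC4 u v huv P hPu hPv hW hS F (by intro w y; simp [F]) A B
    (by intro a ha; simpa [hA] using ha) (by intro a ha; simpa [hB] using ha)
    (by omega) (by omega) g
    (by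
      intro w hw
      simp [hg, hw])
    (by
      intro w hw
      rw [add_comm]
      refine (Finset.card_le_card (t := insert u (F w)) ?_).trans (Finset.card_insert_le _ _)
      intro y hy
      simp only [hA, F, Finset.mem_filter, Finset.mem_insert, Finset.mem_univ, true_and, hmN]
        at hw hy ⊢
      by_cases h1 : y = u
      · exact Or.inl h1
      · have h2 : y ≠ v := by rintro rfl; exact hw.2.1 hy.2.2.2.symm
        tauto)
    (by
      intro w hw
      rw [add_comm]
      refine (Finset.card_le_card (t := insert v (F w)) ?_).trans (Finset.card_insert_le _ _)
      intro y hy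
      simp only [hB, F, Finset.mem_filter, Finset.mem_insert, Finset.mem_univ, true_and, hmN]
        at hw hy ⊢
      by_cases h1 : y = v
      · exact Or.inl h1
      · have h2 : y ≠ u := by rintro rfl; exact hw.2.1 hy.2.2.2.symm
        tauto)
  have hdegN : ∀ S : Finset V, ∑ w ∈ S, (Finset.univ.filter (fun y => G.Adj w y)).card
      ≤ S.card * d := by
    intro S
    rw [← smul_eq_mul]
    exact Finset.sum_le_card_nsmul _ _ _ (fun w _ => hΔ w)
  have hgT : ∑ w ∈ T, g w ≤ T.card * d := by
    rw [← smul_eq_mul]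
    exact Finset.sum_le_card_nsmul _ _ _ (fun w _ => hgd w)
  have hsplit : ∀ h : V → ℕ, ∑ w ∈ N, h w ≤ ∑ w ∈ A, h w + ∑ w ∈ B, h w + ∑ w ∈ T, h w := by
    intro h
    have h1 := Finset.sum_union_inter (s₁ := A ∪ B) (s₂ := T) (f := h)
    have h2 := Finset.sum_union_inter (s₁ := A) (s₂ := B) (f := h)
    rw [← hN] at h1
    omega
  rw [Finset.sum_add_distrib] at hcount
  have q1 := hsplit g
  have q2 := hsplit (fun w => (Finset.univ.filter (fun y => G.Adj w y)).card)
  have r1 := hdegN A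
  have r2 := hdegN B
  have r3 := hdegN T
  have s1 : (A.card + T.card + 1) * d ≤ d * d := Nat.mul_le_mul_right _ hAT
  have s2 : (B.card + T.card + 1) * d ≤ d * d := Nat.mul_le_mul_right _ hBT
  simp only [add_mul, one_mul] at s1 s2
  rw [sq d] at hleave ⊢
  generalize max (d * d) (4 * d) = mm at *
  change _ ≤ _ + ∑ w ∈ N, g w at hcount
  omega

/-- lower bound for locally optimal induced matchings in `C₄`-free graphs. -/
theorem stmt7 [Fintype V] (G : SimpleGraph V) (d : ℕ) (hd : 3 ≤ d)
    (hΔ : ∀ v : V, (G.neighborSet v).ncard ≤ d) (hC4 : C4Free G)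
    (M : Set (Sym2 V)) (hmax : IsMaximalInducedMatching G M) (hstab : LSStable G M) :
    (M.ncard : ℝ) ≥
      (G.edgeSet.ncard : ℝ) /
        max ((d : ℝ) ^ 2 + (d : ℝ) / 2) ((9 / 8) * (d : ℝ) ^ 2) := by
  have hΔ' : ∀ v : V, (Finset.univ.filter (fun y => G.Adj v y)).card ≤ d := by
    intro v
    have := hΔ v
    rw [Set.ncard_eq_toFinset_card'] at this
    convert this using 2
    ext y; simp
  have hsymm : ∀ e f, Conflict G e f → Conflict G f e := by
    rintro e f ⟨a, ha, b, hb, h⟩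
    exact ⟨b, hb, a, ha, h.imp Eq.symm (fun h => h.symm)⟩
  obtain ⟨⟨hME, hMI⟩, hmx⟩ := hmax
  have hdom : ∀ f ∈ G.edgeSet, ∃ e ∈ M, Conflict G e f := by
    intro f hf
    by_contra hcon
    push Not at hcon
    have hfM : f ∉ M := by
      intro h
      induction f using Sym2.ind with
      | _ x y => exact hcon _ h ⟨x, by simp, x, by simp, Or.inl rfl⟩
    have := hmx (insert f M) ⟨Set.insert_subset hf hME, ?_⟩ (Set.subset_insert _ _)
    · exact hfM (this ▸ Set.mem_insert f M)
    · rintro e (rfl | he) f' (rfl | hf') hne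
      · exact absurd rfl hne
      · exact fun h => hcon _ hf' (hsymm _ _ h)
      · exact hcon _ he
      · exact hMI e he f' hf' hne
  have hPCmem : ∀ e f, f ∈ PCSet G M e ↔
      f ∈ G.edgeSet ∧ Conflict G e f ∧ ∀ e' ∈ M, e' ≠ e → ¬ Conflict G e' f := by
    intro e f
    simp only [PCSet, CSet, Set.mem_sdiff, Set.mem_ofPred_eq, Set.mem_iUnion, Set.mem_singleton_iff]
    constructor
    · rintro ⟨⟨h1, h2⟩, h3⟩
      exact ⟨h1, h2, fun e' h4 h5 h6 => h3 ⟨e', ⟨h4, h5⟩, h1, h6⟩⟩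
    · rintro ⟨h1, h2, h3⟩
      refine ⟨⟨h1, h2⟩, ?_⟩
      rintro ⟨e', ⟨h4, h5⟩, -, h6⟩
      exact h3 e' h4 h5 h6
  let EE : Finset (Sym2 V) := Finset.univ.filter (fun f => f ∈ G.edgeSet)
  let MM : Finset (Sym2 V) := Finset.univ.filter (fun f => f ∈ M)
  let C : Sym2 V → Finset (Sym2 V) := fun e => EE.filter (fun f => Conflict G e f)
  let PC : Sym2 V → Finset (Sym2 V) := fun e => EE.filter (fun f => f ∈ PCSet G M e)
  have hloc : ∀ e ∈ MM, 4 * ((C e).card + (PC e).card) ≤ 8 * d ^ 2 + max (d ^ 2) (4 * d) := by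
    intro e he
    have heM : e ∈ M := by simpa [MM] using he
    induction e using Sym2.ind with
    | _ u v =>
    have huv : G.Adj u v := by simpa using hME heM
    let P : V → Prop := fun w => ∀ e' ∈ M, e' ≠ s(u, v) → ∀ c ∈ e', ¬ (c = w ∨ G.Adj c w)
    have hP : ∀ a x, P a → P x → ∀ e' ∈ M, e' ≠ s(u, v) → ¬ Conflict G e' s(a, x) := by
      rintro a x pa px e' h1 h2 ⟨c, hc, b, hb, h⟩
      rcases Sym2.mem_iff.1 hb with rfl | rfl
      · exact pa e' h1 h2 c hc h
      · exact px e' h1 h2 c hc h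
    apply aux_local G d hd hΔ' hC4 u v huv P
    · intro e' h1 h2 c hc h
      exact hMI e' h1 _ heM h2 ⟨c, hc, u, by simp, h⟩
    · intro e' h1 h2 c hc h
      exact hMI e' h1 _ heM h2 ⟨c, hc, v, by simp, h⟩
    · intro x y px py xu xv ux vx yu yv uy vy hxy
      obtain ⟨e', he', hc⟩ := hdom s(x, y) hxy
      by_cases h : e' = s(u, v)
      · subst h
        obtain ⟨c, hc, b, hb, h⟩ := hc
        rcases Sym2.mem_iff.1 hc with rfl | rfl <;> rcases Sym2.mem_iff.1 hb with rfl | rfl <;>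
          rcases h with h | h <;> first | exact absurd h.symm ‹_› | exact absurd h ‹_›
      · exact hP x y px py e' he' h hc
    · intro a x b y pa px pb py ax bY ha hb hab hay
      have hm : ∀ a x, P a → P x → G.Adj a x → (G.Adj u a ∨ G.Adj v a) →
          s(a, x) ∈ PCSet G M s(u, v) := by
        intro a x pa px ax ha
        rw [hPCmem]
        refine ⟨ax, ?_, hP a x pa px⟩
        rcases ha with h | h
        · exact ⟨u, by simp, a, by simp, Or.inr h⟩
        · exact ⟨v, by simp, a, by simp, Or.inr h⟩
      have hne : s(a, x) ≠ s(b, y) := by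
        intro h
        rcases Sym2.eq_iff.1 h with h | h
        · exact hab h.1
        · exact hay h.1
      obtain ⟨-, p, hp, q, hq, h⟩ :=
        hstab _ heM _ (hm a x pa px ax ha) _ (hm b y pb py bY hb) hne
      rcases Sym2.mem_iff.1 hp with rfl | rfl <;> rcases Sym2.mem_iff.1 hq with rfl | rfl <;>
        tauto
    · intro f hf
      simpa [C, EE] using hf
    · intro f hf
      have hf2 : f ∈ PCSet G M s(u, v) := (Finset.mem_filter.1 hf).2
      rw [hPCmem] at hf2
      refine ⟨hf2.1, hf2.2.1, ?_⟩
      intro w hw e' h1 h2 c hc h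
      exact hf2.2.2 e' h1 h2 ⟨c, hc, w, hw, h⟩
  have hdc : 2 * EE.card ≤ ∑ e ∈ MM, ((C e).card + (PC e).card) := by
    have h1 : ∑ e ∈ MM, ((C e).card + (PC e).card) =
        ∑ f ∈ EE, ((MM.filter (fun e => Conflict G e f)).card +
          (MM.filter (fun e => f ∈ PCSet G M e)).card) := by
      simp only [Finset.sum_add_distrib, C, PC, Finset.card_filter]
      congr 1 <;> exact Finset.sum_comm
    rw [h1, mul_comm, ← smul_eq_mul]
    apply Finset.card_nsmul_le_sum
    intro f hf
    have hfE : f ∈ G.edgeSet := (Finset.mem_filter.1 hf).2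
    obtain ⟨e, he, hc⟩ := hdom f hfE
    have heC : e ∈ MM.filter (fun e => Conflict G e f) := by simp [MM, he, hc]
    by_cases hp : f ∈ PCSet G M e
    · have heP : e ∈ MM.filter (fun e => f ∈ PCSet G M e) := by simp [MM, he, hp]
      have := Finset.card_pos.2 ⟨e, heC⟩
      have := Finset.card_pos.2 ⟨e, heP⟩
      omega
    · rw [hPCmem] at hp
      push Not at hp
      obtain ⟨e', he', hne, hc'⟩ := hp hfE hc
      have heC' : e' ∈ MM.filter (fun e => Conflict G e f) := by simp [MM, he', hc']
      have := Finset.one_lt_card.2 ⟨e', heC', e, heC, hne⟩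
      omega
  have hfin : 8 * EE.card ≤ MM.card * (8 * d ^ 2 + max (d ^ 2) (4 * d)) := by
    have h1 : ∑ e ∈ MM, 4 * ((C e).card + (PC e).card) ≤
        MM.card * (8 * d ^ 2 + max (d ^ 2) (4 * d)) := by
      rw [← smul_eq_mul]
      exact Finset.sum_le_card_nsmul _ _ _ hloc
    rw [← Finset.mul_sum] at h1
    omega
  have hEc : G.edgeSet.ncard = EE.card := by
    rw [← Set.ncard_coe_finset]; congr 1; ext f; simp [EE]
  have hMc : M.ncard = MM.card := by
    rw [← Set.ncard_coe_finset]; congr 1; ext f; simp [MM]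
  have hd0 : (0 : ℝ) < d := by exact_mod_cast (by omega : 0 < d)
  rw [ge_iff_le, hEc, hMc, div_le_iff₀ (lt_max_of_lt_left (by positivity))]
  have hfin' : (8 : ℝ) * EE.card ≤ MM.card * (8 * d ^ 2 + max ((d : ℝ) ^ 2) (4 * d)) := by
    exact_mod_cast hfin
  have hmm : (8 : ℝ) * d ^ 2 + max ((d : ℝ) ^ 2) (4 * d) =
      8 * max ((d : ℝ) ^ 2 + (d : ℝ) / 2) ((9 / 8) * (d : ℝ) ^ 2) := by
    rw [← max_add_add_left, mul_max_of_nonneg _ _ (by norm_num), max_comm]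
    congr 1 <;> ring
  rw [hmm] at hfin'
  linarith
end

section
/- Let G be a graph of maximum degree at most d with d ≥ 3, and M a maximal induced matching of G that is stable under the local-search exchange operation. Suppose c_G(xy) ≥ f and n_{xy} ≥ g for every edge xy of G. Then Σ_{xy ∈ M} |PC_G(M, xy)| ≤ (4d² − 1 − 2f − 6g)·|M| + Σ_{xy ∈ M} m_{xy}, where m_{xy} is the number of edges of G with both endpoints in (N_G(x) ∪ N_G(y)) \ {x, y}. -/
open Classical

variable {V : Type*}

/-- For an edge `e = s(x,y)`, the set of edges with both endpoints in
`(N_G(x) ∪ N_G(y)) \ {x, y}`. -/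
noncomputable def mAround (G : SimpleGraph V) (e : Sym2 V) : ℕ :=
  (edgesWithin G ((⋃ a ∈ e, G.neighborSet a) \ {a : V | a ∈ e})).ncard

theorem c_bound [Fintype V] (G : SimpleGraph V) (d : ℕ)
    (hΔ : ∀ v : V, (G.neighborSet v).ncard ≤ d) (u v : V) (h : G.Adj u v) :
    (CSet G s(u,v)).ncard + mAround G s(u,v) + d * (G.neighborSet u ∩ G.neighborSet v).ncard + 2 * d
      ≤ 2 * d ^ 2 + 1 := by
  have hS : ((⋃ a ∈ s(u,v), G.neighborSet a) \ {a : V | a ∈ s(u,v)})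
      = (G.neighborSet u ∪ G.neighborSet v) \ {u, v} := by
    ext w; simp
  unfold mAround
  rw [hS]
  set S := (G.neighborSet u ∪ G.neighborSet v) \ {u, v} with hSdef
  have hcard : S.ncard + (G.neighborSet u ∩ G.neighborSet v).ncard + 2 ≤ 2 * d := by
    have h1 := Set.ncard_union_add_ncard_inter (G.neighborSet u) (G.neighborSet v)
    have h2 : S.ncard + ({u, v} : Set V).ncard = (G.neighborSet u ∪ G.neighborSet v).ncard := by
      refine Set.ncard_sdiff_add_ncard_of_subset ?_ (Set.toFinite _)
      rintro w (rfl | rfl)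
      · right; exact h.symm
      · left; exact h
    rw [Set.ncard_pair h.ne] at h2
    have := hΔ u
    have := hΔ v
    omega
  have hdc : (CSet G s(u,v)).ncard + (edgesWithin G S).ncard ≤ d * S.ncard + 1 := by
    let E : Finset (Sym2 V) := Finset.univ.filter (· ∈ G.edgeSet)
    have hA : (CSet G s(u,v)).ncard ≤ (E.filter (fun e => ∃ s ∈ S, s ∈ e)).card + 1 := by
      have : CSet G s(u,v) ⊆ ↑(insert s(u,v) (E.filter (fun e => ∃ s ∈ S, s ∈ e))) := by
        intro e he
        obtain ⟨he, a, ha, b, hb, hab⟩ := he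
        by_cases heq : e = s(u,v)
        · simp [heq]
        simp only [Finset.coe_insert, Set.mem_insert_iff, heq, false_or, Finset.coe_filter, Set.mem_setOf_eq, E,
          Finset.mem_filter, Finset.mem_univ, true_and]
        refine ⟨he, ?_⟩
        by_contra hcon
        push Not at hcon
        apply heq
        have hin : ∀ w ∈ e, (G.Adj u w ∨ G.Adj v w) → w = u ∨ w = v := by
          intro w hw hadj
          by_contra hne
          apply hcon w _ hw
          simp only [hSdef, Set.mem_diff, Set.mem_union, SimpleGraph.mem_neighborSet]
          exact ⟨hadj, by simpa using hne⟩
        have hb' : b = u ∨ b = v := by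
          have ha' : a = u ∨ a = v := by simpa using ha
          rcases hab with rfl | hab
          · exact ha'
          · apply hin b hb
            rcases ha' with rfl | rfl
            · exact Or.inl hab
            · exact Or.inr hab
        obtain ⟨c, rfl⟩ := hb
        have hbc : G.Adj b c := he
        rcases hb' with rfl | rfl
        · rcases hin c (by simp) (Or.inl hbc) with rfl | rfl
          · exact absurd hbc (G.irrefl)
          · rfl
        · rcases hin c (by simp) (Or.inr hbc) with rfl | rfl
          · exact Sym2.eq_swap
          · exact absurd hbc (G.irrefl)
      calc _ ≤ _ := Set.ncard_le_ncard this (Set.toFinite _)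
        _ ≤ _ := by rw [Set.ncard_coe_finset]; exact Finset.card_insert_le _ _
    have hB : (edgesWithin G S).ncard = (E.filter (fun e => ∀ s ∈ e, s ∈ S)).card := by
      rw [← Set.ncard_coe_finset]; congr 1; ext e; simp [E, edgesWithin]
    have hdeg : ∀ s, (E.filter (fun e => s ∈ e)).card ≤ d := by
      intro s
      refine le_trans ?_ (hΔ s)
      rw [← Set.ncard_coe_finset]
      refine le_trans (Set.ncard_le_ncard (t := (fun w => s(s,w)) '' G.neighborSet s) ?_ (Set.toFinite _)) (Set.ncard_image_le (Set.toFinite _))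
      intro e he
      simp only [E, Finset.coe_filter, Set.mem_setOf_eq, Finset.mem_filter, Finset.mem_univ, true_and] at he
      obtain ⟨he, c, rfl⟩ := he
      exact ⟨c, he, rfl⟩
    have hsum : (E.filter (fun e => ∃ s ∈ S, s ∈ e)).card + (E.filter (fun e => ∀ s ∈ e, s ∈ S)).card
        ≤ ∑ s ∈ S.toFinset, (E.filter (fun e => s ∈ e)).card := by
      have := Finset.sum_card_bipartiteAbove_eq_sum_card_bipartiteBelow (s := S.toFinset) (t := E) (fun s e => s ∈ e)
      simp only [Finset.bipartiteAbove, Finset.bipartiteBelow] at this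
      rw [this, Finset.card_filter, Finset.card_filter, ← Finset.sum_add_distrib]
      apply Finset.sum_le_sum
      intro e he
      induction e using Sym2.inductionOn with
      | hf p q =>
      have hpq : p ≠ q := by
        have : G.Adj p q := by simpa [E] using he
        exact this.ne
      by_cases hp : p ∈ S <;> by_cases hq : q ∈ S
      · have : ({p, q} : Finset V) ⊆ S.toFinset.filter (fun s => s ∈ s(p,q)) := by
          intro w; simp only [Finset.mem_insert, Finset.mem_singleton, Finset.mem_filter, Set.mem_toFinset, Sym2.mem_iff]
          rintro (rfl | rfl)
          · exact ⟨hp, Or.inl rfl⟩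
          · exact ⟨hq, Or.inr rfl⟩
        have := Finset.card_le_card this
        rw [Finset.card_pair hpq] at this
        split_ifs <;> omega
      · have : ({p} : Finset V) ⊆ S.toFinset.filter (fun s => s ∈ s(p,q)) := by
          rw [Finset.singleton_subset_iff, Finset.mem_filter, Set.mem_toFinset]
          exact ⟨hp, by simp⟩
        have := Finset.card_le_card this
        rw [if_neg (c := ∀ s ∈ s(p,q), s ∈ S) (by simp [hq])]
        rw [Finset.card_singleton] at this
        split_ifs <;> omega
      · have : ({q} : Finset V) ⊆ S.toFinset.filter (fun s => s ∈ s(p,q)) := by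
          rw [Finset.singleton_subset_iff, Finset.mem_filter, Set.mem_toFinset]
          exact ⟨hq, by simp⟩
        have := Finset.card_le_card this
        rw [if_neg (c := ∀ s ∈ s(p,q), s ∈ S) (by simp [hp])]
        rw [Finset.card_singleton] at this
        split_ifs <;> omega
      · rw [if_neg (c := ∀ s ∈ s(p,q), s ∈ S) (by simp [hp]), if_neg]
        · simp
        · rintro ⟨s, hs, hs'⟩
          simp only [Sym2.mem_iff] at hs'
          rcases hs' with rfl | rfl <;> contradiction
    have h3 : ∑ s ∈ S.toFinset, (E.filter (fun e => s ∈ e)).card ≤ S.ncard * d := by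
      rw [Set.ncard_eq_toFinset_card']
      exact Finset.sum_le_card_nsmul _ _ _ (fun s _ => hdeg s)
    rw [mul_comm d]
    omega
  nlinarith

theorem H_bound [Fintype V] (G : SimpleGraph V) (d : ℕ) (hd : 3 ≤ d)
    (hΔ : ∀ v : V, (G.neighborSet v).ncard ≤ d) (f g : ℝ)
    (hf : ∀ e ∈ G.edgeSet, f ≤ ((CSet G e).ncard : ℝ))
    (hg : ∀ x y : V, G.Adj x y → g ≤ ((G.neighborSet x ∩ G.neighborSet y).ncard : ℝ))
    (x y : V) (h : G.Adj x y) (Pr : V → Prop)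
    (hnest : ∀ a a' z z', G.Adj x a → G.Adj x a' → Pr a → Pr a' → Pr z → Pr z' →
      G.Adj a z → G.Adj a' z' → ¬ (G.Adj x z ∨ G.Adj y z) → ¬ (G.Adj x z' ∨ G.Adj y z') →
      a = a' ∨ z = z' ∨ G.Adj a a' ∨ G.Adj a z' ∨ G.Adj a' z) :
    (({e : Sym2 V | ∃ a z, e = s(a,z) ∧ G.Adj x a ∧ Pr a ∧ G.Adj a z ∧ Pr z ∧
      ¬ (G.Adj x z ∨ G.Adj y z)}.ncard : ℕ) : ℝ) + f + 3 * g ≤ 2 * (d : ℝ) ^ 2 - d := by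
  set H := {e : Sym2 V | ∃ a z, e = s(a,z) ∧ G.Adj x a ∧ Pr a ∧ G.Adj a z ∧ Pr z ∧
      ¬ (G.Adj x z ∨ G.Adj y z)} with hH
  have hd' : (3:ℝ) ≤ d := by exact_mod_cast hd
  -- generic finishing step
  have fin : ∀ a, G.Adj x a → H.ncard + (G.neighborSet x ∩ G.neighborSet a).ncard + 1 ≤ d + mAround G s(x,a)
      + (d - 2) * (G.neighborSet x ∩ G.neighborSet a).ncard →
      (H.ncard : ℝ) + f + 3 * g ≤ 2 * (d : ℝ) ^ 2 - d := by
    intro a ha hle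
    have h1 := c_bound G d hΔ x a ha
    have h2 := hf s(x,a) ha
    have h3 := hg x a ha
    obtain ⟨k, rfl⟩ : ∃ k, d = k + 2 := ⟨d - 2, by omega⟩
    simp only [Nat.add_sub_cancel] at hle
    have h1' := (Nat.cast_le (α := ℝ)).2 h1
    have hle' := (Nat.cast_le (α := ℝ)).2 hle
    push_cast at h1' hle' ⊢
    nlinarith
  let N : V → Set V := fun a => {z | G.Adj a z ∧ Pr z ∧ ¬ (G.Adj x z ∨ G.Adj y z)}
  by_cases hne : ∃ a, G.Adj x a ∧ Pr a
  swap
  · apply fin y h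
    have : H = ∅ := by
      ext e
      simp only [hH, Set.mem_setOf_eq, Set.mem_empty_iff_false, iff_false]
      rintro ⟨a, z, -, h1, h2, -⟩
      exact hne ⟨a, h1, h2⟩
    rw [this, Set.ncard_empty]
    obtain ⟨k, rfl⟩ : ∃ k, d = k + 3 := ⟨d - 3, by omega⟩
    have : k + 3 - 2 = k + 1 := by omega
    rw [this]
    nlinarith [Nat.zero_le (k * (G.neighborSet x ∩ G.neighborSet y).ncard)]
  obtain ⟨a, ⟨hxa, hPa⟩, hamax⟩ := Set.exists_max_image {a | G.Adj x a ∧ Pr a} (fun a => (N a).ncard) (Set.toFinite _) hne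
  apply fin a hxa
  set T := G.neighborSet x ∩ G.neighborSet a with hT
  have hNa : (N a).ncard + T.ncard + 1 ≤ d := by
    refine le_trans ?_ (hΔ a)
    have hx : x ∉ N a ∪ T := by
      rintro (hx | hx)
      · exact hx.2.2 (Or.inr h.symm)
      · exact G.irrefl hx.1
    rw [← Set.ncard_union_eq, ← Set.ncard_insert_of_notMem hx (Set.toFinite _)]
    · apply Set.ncard_le_ncard _ (Set.toFinite _)
      rintro w (rfl | hw | hw)
      · exact hxa.symm
      · exact hw.1
      · exact hw.2
    · rw [Set.disjoint_left]
      intro w hw hw'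
      exact hw.2.2 (Or.inl hw'.1)
  have hNT : ∀ t ∈ T, (N t).ncard ≤ d - 2 := by
    intro t ht
    have h0 : ({x, a} : Set V) ∪ N t ⊆ G.neighborSet t := by
      rintro w ((rfl | rfl) | hw)
      · exact ht.1.symm
      · exact ht.2.symm
      · exact hw.1
    have h1 := Set.ncard_le_ncard h0 (Set.toFinite _)
    rw [Set.ncard_union_eq, Set.ncard_pair hxa.ne] at h1
    · have := hΔ t; omega
    · rw [Set.disjoint_left]
      rintro w (rfl | rfl) hw
      · exact hw.2.2 (Or.inr h.symm)
      · exact hw.2.2 (Or.inl hxa)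
  have hsub : H ⊆ ((fun z => s(a,z)) '' N a) ∪
      (edgesWithin G ((⋃ b ∈ s(x,a), G.neighborSet b) \ {b : V | b ∈ s(x,a)}))
      ∪ ⋃ t ∈ T.toFinset, (fun z => s(t,z)) '' N t := by
    rintro e ⟨a', z', rfl, hxa', hPa', haz', hPz', hz'⟩
    by_cases haa : a' = a
    · subst haa; left; left; exact ⟨z', ⟨haz', hPz', hz'⟩, rfl⟩
    by_cases hadj : G.Adj a a'
    · right
      simp only [Set.mem_iUnion]
      exact ⟨a', by simp [hT]; exact ⟨hxa', hadj⟩, z', ⟨haz', hPz', hz'⟩, rfl⟩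
    left; right
    have hazz : G.Adj a z' := by
      by_contra hcon
      have hnot : ¬ N a ⊆ N a' := by
        intro hs
        have : N a = N a' := Set.eq_of_subset_of_ncard_le hs (hamax a' ⟨hxa', hPa'⟩) (Set.toFinite _)
        have h5 : z' ∈ N a := this ▸ (⟨haz', hPz', hz'⟩ : z' ∈ N a')
        exact hcon h5.1
      obtain ⟨z, hz, hz2⟩ := Set.not_subset.1 hnot
      rcases hnest a a' z z' hxa hxa' hPa hPa' hz.2.1 hPz' hz.1 haz' hz.2.2 hz' with h6 | h6 | h6 | h6 | h6
      · exact haa h6.symm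
      · subst h6; exact hcon hz.1
      · exact hadj h6
      · exact hcon h6
      · exact hz2 ⟨h6, hz.2⟩
    refine ⟨haz', ?_⟩
    intro b hb
    have hzx : z' ≠ x := by rintro rfl; exact hz' (Or.inr h.symm)
    rcases Sym2.mem_iff.1 hb with rfl | rfl
    · simp [hxa', haa, hxa'.ne']
    · simp [hazz, hazz.ne', hzx]
  have hU : (⋃ t ∈ T.toFinset, (fun z => s(t,z)) '' N t).ncard ≤ (d - 2) * T.ncard := by
    refine le_trans (Finset.set_ncard_biUnion_le _ _) ?_
    rw [Set.ncard_eq_toFinset_card' T, mul_comm]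
    refine Finset.sum_le_card_nsmul _ _ _ (fun t ht => ?_)
    exact le_trans (Set.ncard_image_le (Set.toFinite _)) (hNT t (by simpa using ht))
  have h7 := Set.ncard_le_ncard hsub (Set.toFinite _)
  have h8 := Set.ncard_union_le (((fun z => s(a,z)) '' N a) ∪
      (edgesWithin G ((⋃ b ∈ s(x,a), G.neighborSet b) \ {b : V | b ∈ s(x,a)})))
      (⋃ t ∈ T.toFinset, (fun z => s(t,z)) '' N t)
  have h9 := Set.ncard_union_le ((fun z => s(a,z)) '' N a)
      (edgesWithin G ((⋃ b ∈ s(x,a), G.neighborSet b) \ {b : V | b ∈ s(x,a)}))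
  have h10 : ((fun z => s(a,z)) '' N a).ncard ≤ (N a).ncard := Set.ncard_image_le (Set.toFinite _)
  unfold mAround
  omega

/-- bound on the total number of private conflict edges. -/
theorem stmt18 [Fintype V] (G : SimpleGraph V) (d : ℕ) (hd : 3 ≤ d)
    (hΔ : ∀ v : V, (G.neighborSet v).ncard ≤ d)
    (M : Finset (Sym2 V)) (hmax : IsMaximalInducedMatching G ↑M)
    (hstab : LSStable G ↑M)
    (f g : ℝ)
    (hf : ∀ e ∈ G.edgeSet, f ≤ ((CSet G e).ncard : ℝ))
    (hg : ∀ x y : V, G.Adj x y → g ≤ ((G.neighborSet x ∩ G.neighborSet y).ncard : ℝ)) :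
    ∑ e ∈ M, ((PCSet G ↑M e).ncard : ℝ) ≤
      (4 * (d : ℝ) ^ 2 - 1 - 2 * f - 6 * g) * M.card +
        ∑ e ∈ M, (mAround G e : ℝ) := by
  have key : ∀ e ∈ M, ((PCSet G ↑M e).ncard : ℝ) ≤
      (4 * (d : ℝ) ^ 2 - 1 - 2 * f - 6 * g) + (mAround G e : ℝ) := by
    intro e he
    induction e using Sym2.inductionOn with
    | hf x y =>
    have hxy : G.Adj x y := hmax.1.1 he
    let Pr : V → Prop := fun v => ∀ f' ∈ M, f' ≠ s(x,y) → ∀ u ∈ f', u ≠ v ∧ ¬ G.Adj u v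
    have hPC : ∀ a b, s(a,b) ∈ PCSet G ↑M s(x,y) ↔
        G.Adj a b ∧ Conflict G s(x,y) s(a,b) ∧ Pr a ∧ Pr b := by
      intro a b
      constructor
      · rintro ⟨⟨h1, h2⟩, h3⟩
        have h4 : ∀ w ∈ s(a,b), Pr w := by
          intro w hw f' hf' hne u hu
          by_contra hcon
          apply h3
          simp only [Set.mem_iUnion]
          refine ⟨f', ⟨hf', hne⟩, h1, u, hu, w, hw, ?_⟩
          tauto
        exact ⟨h1, h2, h4 a (by simp), h4 b (by simp)⟩
      · rintro ⟨h1, h2, ha, hb⟩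
        refine ⟨⟨h1, h2⟩, ?_⟩
        simp only [Set.mem_iUnion]
        rintro ⟨f', ⟨hf', hne⟩, -, u, hu, w, hw, h5⟩
        have hw' : Pr w := by
          rcases Sym2.mem_iff.1 hw with rfl | rfl <;> assumption
        have := hw' f' hf' hne u hu
        tauto
    have hind : ∀ z z', Pr z → Pr z' → ¬ (G.Adj x z ∨ G.Adj y z) → ¬ (G.Adj x z' ∨ G.Adj y z') →
        ¬ G.Adj z z' := by
      intro z z' hz hz' hn hn' hadj
      have hzx : z ≠ x := by rintro rfl; exact hn (Or.inr hxy.symm)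
      have hzy : z ≠ y := by rintro rfl; exact hn (Or.inl hxy)
      have hzx' : z' ≠ x := by rintro rfl; exact hn' (Or.inr hxy.symm)
      have hzy' : z' ≠ y := by rintro rfl; exact hn' (Or.inl hxy)
      have hnc : ∀ f' ∈ M, ∀ u ∈ f', ∀ w ∈ s(z,z'), u ≠ w ∧ ¬ G.Adj u w := by
        intro f' hf' u hu w hw
        by_cases hfe : f' = s(x,y)
        · subst hfe
          rcases Sym2.mem_iff.1 hw with rfl | rfl <;> rcases Sym2.mem_iff.1 hu with rfl | rfl <;>
            refine ⟨Ne.symm (by assumption), ?_⟩ <;> tauto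
        · rcases Sym2.mem_iff.1 hw with rfl | rfl
          · exact hz f' hf' hfe u hu
          · exact hz' f' hf' hfe u hu
      have hnotin : s(z,z') ∉ M := fun hin => (hnc _ hin z (by simp) z (by simp)).1 rfl
      have hM := hmax.2 (insert s(z,z') (↑M : Set (Sym2 V))) ⟨?_, ?_⟩ (Set.subset_insert _ _)
      · apply hnotin
        have : s(z,z') ∈ (↑M : Set (Sym2 V)) := hM ▸ Set.mem_insert _ _
        exact this
      · rintro e (rfl | he)
        · exact hadj
        · exact hmax.1.1 he
      · rintro e1 (rfl | h1) e2 (rfl | h2) hne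
        · exact absurd rfl hne
        · rintro ⟨a, ha, b, hb, hab⟩
          have := hnc _ h2 b hb a ha
          rcases hab with rfl | hab
          · exact this.1 rfl
          · exact this.2 hab.symm
        · rintro ⟨a, ha, b, hb, hab⟩
          have := hnc _ h1 a ha b hb
          tauto
        · exact hmax.1.2 e1 h1 e2 h2 hne
    have hnest : ∀ a a' z z', (G.Adj x a ∨ G.Adj y a) → (G.Adj x a' ∨ G.Adj y a') →
      Pr a → Pr a' → Pr z → Pr z' →
      G.Adj a z → G.Adj a' z' → ¬ (G.Adj x z ∨ G.Adj y z) → ¬ (G.Adj x z' ∨ G.Adj y z') →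
      a = a' ∨ z = z' ∨ G.Adj a a' ∨ G.Adj a z' ∨ G.Adj a' z := by
      intro a a' z z' ha ha' hPa hPa' hPz hPz' haz haz' hz hz'
      by_cases haa : a = a'
      · exact Or.inl haa
      have hconf : ∀ a z, (G.Adj x a ∨ G.Adj y a) → Conflict G s(x,y) s(a,z) := by
        rintro a z (h1 | h1)
        · exact ⟨x, by simp, a, by simp, Or.inr h1⟩
        · exact ⟨y, by simp, a, by simp, Or.inr h1⟩
      have haz2 : a ≠ z' := by rintro rfl; exact hz' ha
      have haz3 : a' ≠ z := by rintro rfl; exact hz ha'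
      have hne : s(a,z) ≠ s(a',z') := by
        intro h
        rcases Sym2.eq_iff.1 h with h | h
        · exact haa h.1
        · exact haz2 h.1
      obtain ⟨-, p, hp, q, hq, hpq⟩ := hstab _ he _ ((hPC a z).2 ⟨haz, hconf a z ha, hPa, hPz⟩)
        _ ((hPC a' z').2 ⟨haz', hconf a' z' ha', hPa', hPz'⟩) hne
      have hzz := hind z z' hPz hPz' hz hz'
      have hc := G.adj_comm z a'
      have := haz3.symm
      rcases Sym2.mem_iff.1 hp with rfl | rfl <;> rcases Sym2.mem_iff.1 hq with rfl | rfl <;> tauto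
    have hX := H_bound G d hd hΔ f g hf hg x y hxy Pr
      (fun a a' z z' h1 h2 => hnest a a' z z' (Or.inl h1) (Or.inl h2))
    have hY := H_bound G d hd hΔ f g hf hg y x hxy.symm Pr
      (fun a a' z z' h1 h2 h3 h4 h5 h6 h7 h8 h9 h10 => hnest a a' z z' (Or.inr h1) (Or.inr h2)
        h3 h4 h5 h6 h7 h8 (fun h => h9 h.symm) (fun h => h10 h.symm))
    set HX := {e : Sym2 V | ∃ a z, e = s(a,z) ∧ G.Adj x a ∧ Pr a ∧ G.Adj a z ∧ Pr z ∧
      ¬ (G.Adj x z ∨ G.Adj y z)} with hHX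
    set HY := {e : Sym2 V | ∃ a z, e = s(a,z) ∧ G.Adj y a ∧ Pr a ∧ G.Adj a z ∧ Pr z ∧
      ¬ (G.Adj y z ∨ G.Adj x z)} with hHY
    set W := edgesWithin G ((⋃ b ∈ s(x,y), G.neighborSet b) \ {b : V | b ∈ s(x,y)}) with hW
    set I := (fun z => s(x,z)) '' G.neighborSet x with hI
    set J := (fun z => s(y,z)) '' (G.neighborSet y \ {x}) with hJ
    have hsub : PCSet G ↑M s(x,y) ⊆ ((I ∪ J) ∪ W) ∪ (HX ∪ HY) := by
      have hIJ : ∀ w z, G.Adj w z → (w = x ∨ w = y) → s(w,z) ∈ I ∪ J := by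
        rintro w z hwz (rfl | rfl)
        · left; exact ⟨z, hwz, rfl⟩
        · by_cases hzx : z = x
          · subst hzx; left; exact ⟨w, hwz.symm, Sym2.eq_swap⟩
          · right; exact ⟨z, ⟨hwz, hzx⟩, rfl⟩
      have hst : ∀ a b, G.Adj a b → (G.Adj x a ∨ G.Adj y a) → Pr a → Pr b →
          s(a,b) ∈ ((I ∪ J) ∪ W) ∪ (HX ∪ HY) := by
        intro a b hab ha hPa hPb
        by_cases h1 : a = x ∨ a = y
        · left; left; exact hIJ a b hab h1
        by_cases h2 : b = x ∨ b = y
        · left; left; rw [Sym2.eq_swap]; exact hIJ b a hab.symm h2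
        by_cases h3 : G.Adj x b ∨ G.Adj y b
        · left; right
          refine ⟨hab, ?_⟩
          intro w hw
          rcases Sym2.mem_iff.1 hw with rfl | rfl
          · simp only [Set.mem_diff, Set.mem_iUnion, Set.mem_setOf_eq, Sym2.mem_iff]
            refine ⟨?_, h1⟩
            rcases ha with ha | ha
            · exact ⟨x, Or.inl rfl, ha⟩
            · exact ⟨y, Or.inr rfl, ha⟩
          · simp only [Set.mem_diff, Set.mem_iUnion, Set.mem_setOf_eq, Sym2.mem_iff]
            refine ⟨?_, h2⟩
            rcases h3 with ha | ha
            · exact ⟨x, Or.inl rfl, ha⟩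
            · exact ⟨y, Or.inr rfl, ha⟩
        · right
          rcases ha with ha | ha
          · left; exact ⟨a, b, rfl, ha, hPa, hab, hPb, h3⟩
          · right; exact ⟨a, b, rfl, ha, hPa, hab, hPb, fun h => h3 h.symm⟩
      intro e' he'
      induction e' using Sym2.inductionOn with
      | hf a b =>
      obtain ⟨hab, ⟨p, hp, q, hq, hpq⟩, hPa, hPb⟩ := (hPC a b).1 he'
      have hq' : G.Adj x q ∨ G.Adj y q := by
        rcases Sym2.mem_iff.1 hp with rfl | rfl <;> rcases hpq with rfl | hpq
        · exact Or.inr hxy.symm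
        · exact Or.inl hpq
        · exact Or.inl hxy
        · exact Or.inr hpq
      rcases Sym2.mem_iff.1 hq with rfl | rfl
      · exact hst _ _ hab hq' hPa hPb
      · rw [Sym2.eq_swap]; exact hst _ _ hab.symm hq' hPb hPa
    have hcard := Set.ncard_le_ncard hsub (Set.toFinite _)
    have u1 := Set.ncard_union_le ((I ∪ J) ∪ W) (HX ∪ HY)
    have u2 := Set.ncard_union_le (I ∪ J) W
    have u3 := Set.ncard_union_le I J
    have u4 := Set.ncard_union_le HX HY
    have i1 : I.ncard ≤ d := le_trans (Set.ncard_image_le (Set.toFinite _)) (hΔ x)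
    have j1 : J.ncard + 1 ≤ d := by
      have h1 : J.ncard ≤ _ := Set.ncard_image_le (Set.toFinite _)
      have h2 : (G.neighborSet y \ {x}).ncard + 1 = (G.neighborSet y).ncard :=
        Set.ncard_diff_singleton_add_one hxy.symm (Set.toFinite _)
      have := hΔ y
      omega
    have hm : mAround G s(x,y) = W.ncard := rfl
    have tot : (PCSet G ↑M s(x,y)).ncard + 1 ≤ 2 * d + mAround G s(x,y) + HX.ncard + HY.ncard := by
      omega
    have tot' := (Nat.cast_le (α := ℝ)).2 tot
    push_cast at tot'
    linarith
  refine le_trans (Finset.sum_le_sum key) ?_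
  rw [Finset.sum_add_distrib, Finset.sum_const, nsmul_eq_mul, mul_comm]
end
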